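/- arXiv:1908.01149 — 8 statements merged into one kernel-verified Lean document; each statement's English description precedes it below -/
import Mathlib

section
/- Let (X,d) be a compact metric space and f : X → X a continuous map with a fixed point p ∈ X (f(p) = p). Then (X,f) has the approximate product property and zero topological entropy if and only if (X,f) is uniquely ergodic, i.e. the Dirac measure δ_p is the unique f-invariant Borel probability measure on X. -/
open MeasureTheory Filter Set

section Defs

variable {X : Type*} [MetricSpace X]

/-- `segStart m t k` is the time `s_k` at which the `k`-th orbit segment starts
(indexing from `k = 0`): `s_0 = 0`, `s_{k+1} = s_k + m_k + t_k - 1`. -/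
def segStart (m t : ℕ → ℕ) (k : ℕ) : ℕ :=
  ∑ i ∈ Finset.range k, (m i + t i - 1)

/-- `(δ, ε)`-tracing of the sequence of orbit segments `(C k, m k)` with gaps `t k`
by the point `z`. -/
def Traced (f : X → X) (C : ℕ → X) (m t : ℕ → ℕ) (δ ε : ℝ) (z : X) : Prop :=
  ∀ k : ℕ,
    (((Finset.range (m k)).filter
      (fun j => ε < dist (f^[segStart m t k + j] z) (f^[j] (C k)))).card : ℝ)
      ≤ δ * (m k)

/-- The approximate product property. -/
def ApproxProduct (f : X → X) : Prop :=
  ∀ δ₁ δ₂ ε : ℝ, 0 < δ₁ → 0 < δ₂ → 0 < ε →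
    ∃ M : ℕ, ∀ n : ℕ, M < n → ∀ C : ℕ → X,
      ∃ t : ℕ → ℕ, (∀ k, 0 < t k) ∧ (∀ k, (t k : ℝ) ≤ 1 + δ₁ * n) ∧
        ∃ z : X, Traced f C (fun _ => n) t δ₂ ε z

/-- The strict approximate product property. -/
def StrictApproxProduct (f : X → X) : Prop :=
  ∀ δ ε : ℝ, 0 < δ → 0 < ε →
    ∃ M : ℕ, ∀ n : ℕ, M < n → ∀ C : ℕ → X,
      ∃ t : ℕ → ℕ, (∀ k, 0 < t k) ∧ (∀ k, (t k : ℝ) ≤ 1 + δ * n) ∧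
        ∃ z : X, Traced f C (fun _ => n) t 0 ε z

/-- Maximal cardinality of an `(n, ε)`-separated subset of `K`. -/
noncomputable def sepNum (f : X → X) (K : Set X) (n : ℕ) (ε : ℝ) : ℕ :=
  sSup {c : ℕ | ∃ S : Finset X, ↑S ⊆ K ∧ S.card = c ∧
    ∀ y ∈ S, ∀ y' ∈ S, y ≠ y' → ∃ j < n, ε < dist (f^[j] y) (f^[j] y')}

/-- Entropy of `f` on `K` at scale `ε`:
`h(K, f, ε) = limsup_n (1/n) log s(K, n, ε)`. -/
noncomputable def entScale (f : X → X) (K : Set X) (ε : ℝ) : EReal :=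
  limsup (fun n : ℕ => ((Real.log (sepNum f K n ε) / n : ℝ) : EReal)) atTop

/-- Bowen's topological entropy `h(f) = lim_{ε → 0} h(X, f, ε)`
(the limit is a supremum by monotonicity in `ε`). -/
noncomputable def topEnt (f : X → X) : EReal :=
  ⨆ (ε : ℝ) (_ : (0:ℝ) < ε), entScale f Set.univ ε

/-- Unique ergodicity: there is exactly one `f`-invariant Borel probability measure. -/
def UniquelyErgodic [MeasurableSpace X] (f : X → X) : Prop :=
  ∃! μ : Measure X, IsProbabilityMeasure μ ∧ Measure.map f μ = μ

/-- Minimality: every orbit is dense. -/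
def MinimalSystem (f : X → X) : Prop :=
  ∀ x : X, Dense (Set.range fun n => f^[n] x)


theorem aux_code_count {α : Type*} [Fintype α] [DecidableEq α] (o : α) (n : ℕ)
    (S : Finset (Fin n → α)) (b : ℝ)
    (hS : ∀ g ∈ S, ((Finset.univ.filter (fun j => g j ≠ o)).card : ℝ) ≤ b)
    (l : ℝ) (hl : 0 < l) (hl1 : l ≤ 1) :
    (S.card : ℝ) * l ^ b ≤ Real.exp (n * (l * Fintype.card α)) := by
  have h1 : (S.card : ℝ) * l ^ b ≤ ∑ g ∈ S, ∏ j, (if g j = o then (1:ℝ) else l) := by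
    rw [← nsmul_eq_mul]
    apply Finset.card_nsmul_le_sum
    intro g hg
    rw [Finset.prod_ite]
    simp only [Finset.prod_const_one, one_mul, Finset.prod_const]
    rw [← Real.rpow_natCast]
    exact Real.rpow_le_rpow_of_exponent_ge hl hl1 (hS g hg)
  have h2 : ∑ g ∈ S, ∏ j, (if g j = o then (1:ℝ) else l) ≤
      ∑ g : Fin n → α, ∏ j, (if g j = o then (1:ℝ) else l) := by
    apply Finset.sum_le_sum_of_subset_of_nonneg (Finset.subset_univ _)
    intro g _ _
    apply Finset.prod_nonneg
    intro j _
    split_ifs <;> linarith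
  have h3 : ∑ g : Fin n → α, ∏ j, (if g j = o then (1:ℝ) else l) =
      ∏ j : Fin n, ∑ a : α, (if a = o then (1:ℝ) else l) := by
    rw [Finset.prod_univ_sum]
    simp
  have h4 : ∑ a : α, (if a = o then (1:ℝ) else l) ≤ Real.exp (l * Fintype.card α) := by
    have : ∑ a : α, (if a = o then (1:ℝ) else l) ≤ ∑ a : α, ((if a = o then (1:ℝ) else 0) + l) := by
      apply Finset.sum_le_sum
      intro a _
      split_ifs <;> linarith
    refine this.trans ?_
    rw [Finset.sum_add_distrib]
    simp only [Finset.sum_ite_eq', Finset.mem_univ, if_true, Finset.sum_const, Finset.card_univ,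
      nsmul_eq_mul]
    have := Real.add_one_le_exp (l * Fintype.card α)
    linarith
  have h5 : (0:ℝ) ≤ ∑ a : α, (if a = o then (1:ℝ) else l) := by
    apply Finset.sum_nonneg
    intro j _
    split_ifs <;> linarith
  calc _ ≤ _ := h1
    _ ≤ _ := h2
    _ = _ := h3
    _ ≤ _ := by
      rw [Finset.prod_const, Finset.card_univ, Fintype.card_fin, Real.exp_nat_mul]
      exact pow_le_pow_left₀ h5 h4 n

theorem aux_sep_le {X : Type*} [MetricSpace X] (f : X → X) (n : ℕ) (ε : ℝ) {β : Type*}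
    [DecidableEq β]
    (T : Finset β) (code : X → β) (hT : ∀ y, code y ∈ T)
    (h : ∀ y y', code y = code y' → ∀ j < n, dist (f^[j] y) (f^[j] y') ≤ ε) (S : Finset X)
    (hS : ∀ y ∈ S, ∀ y' ∈ S, y ≠ y' → ∃ j < n, ε < dist (f^[j] y) (f^[j] y')) :
    S.card ≤ T.card := by
  apply Finset.card_le_card_of_injOn code (fun y _ => hT y)
  intro y hy y' hy' hc
  by_contra hne
  obtain ⟨j, hj, hd⟩ := hS y hy y' hy' hne
  exact absurd (h y y' hc j hj) (not_le.2 hd)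

theorem aux_sepNum_le {X : Type*} [MetricSpace X] (f : X → X) (n : ℕ) (ε : ℝ) {β : Type*}
    [DecidableEq β]
    (T : Finset β) (code : X → β) (hT : ∀ y, code y ∈ T)
    (h : ∀ y y', code y = code y' → ∀ j < n, dist (f^[j] y) (f^[j] y') ≤ ε) :
    sepNum f Set.univ n ε ≤ T.card := by
  apply csSup_le
  · exact ⟨0, ∅, by simp⟩
  · rintro c ⟨S, _, rfl, hS⟩
    exact aux_sep_le f n ε T code hT h S hS

/-- finite cover by small balls, as a choice function -/
theorem aux_cover {X : Type*} [MetricSpace X] [CompactSpace X] (ε : ℝ) (hε : 0 < ε) :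
    ∃ (F : Finset X) (c : X → F), ∀ x : X, dist x (c x : X) ≤ ε / 2 := by
  obtain ⟨t, -, ht, hc⟩ := Metric.totallyBounded_iff.1 (isCompact_univ (X := X)).totallyBounded
    (ε / 2) (by linarith) |>.imp (fun t h => (⟨trivial, h.1, h.2⟩ : True ∧ t.Finite ∧ _))
  have : ∀ x : X, ∃ y : ht.toFinset, dist x y ≤ ε / 2 := by
    intro x
    have := hc (Set.mem_univ x)
    simp only [Set.mem_iUnion, Metric.mem_ball] at this
    obtain ⟨y, hy, hd⟩ := this
    exact ⟨⟨y, ht.mem_toFinset.2 hy⟩, hd.le⟩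
  choose c hc using this
  exact ⟨_, c, hc⟩

theorem aux_sep_le_sepNum {X : Type*} [MetricSpace X] [CompactSpace X] (f : X → X) (n : ℕ)
    (ε : ℝ) (hε : 0 < ε) (S : Finset X)
    (hS : ∀ y ∈ S, ∀ y' ∈ S, y ≠ y' → ∃ j < n, ε < dist (f^[j] y) (f^[j] y')) :
    S.card ≤ sepNum f Set.univ n ε := by
  classical
  obtain ⟨F, c, hc⟩ := aux_cover (X := X) ε hε
  apply le_csSup
  · refine ⟨(Finset.univ : Finset (Fin n → F)).card, ?_⟩
    rintro k ⟨S, _, rfl, hS⟩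
    refine aux_sep_le f n ε _ (fun y (j : Fin n) => c (f^[j] y)) (fun _ => Finset.mem_univ _) ?_ S hS
    intro y y' h j hj
    have h1 := congrFun h ⟨j, hj⟩
    simp only at h1
    have h2 := hc (f^[j] y)
    have h3 := hc (f^[j] y')
    rw [← h1] at h3
    have := dist_triangle_right (f^[j] y) (f^[j] y') (c (f^[j] y))
    linarith
  · exact ⟨S, Set.subset_univ _, rfl, hS⟩

/-- zero entropy from uniformly small frequency of visits away from `p` -/
theorem aux_zero_entropy {X : Type*} [MetricSpace X] [CompactSpace X] (f : X → X) (p : X)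
    (H : ∀ δ ε : ℝ, 0 < δ → 0 < ε → ∃ M : ℕ, ∀ n : ℕ, M < n → ∀ x : X,
      (((Finset.range n).filter (fun j => ε < dist (f^[j] x) p)).card : ℝ) ≤ δ * n) :
    topEnt f = 0 := by
  classical
  apply le_antisymm
  · refine iSup₂_le fun ε hε => ?_
    apply EReal.le_of_forall_lt_iff_le.1
    intro η hη
    have hη : 0 < η := by exact_mod_cast hη
    obtain ⟨F, c, hc⟩ := aux_cover (X := X) ε hε
    set N : ℝ := (Fintype.card (Option F) : ℝ) with hN
    have hN0 : 0 < N := by rw [hN]; exact_mod_cast Fintype.card_pos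
    -- choose l, δ
    obtain ⟨l, hl, hl1, hlN⟩ : ∃ l : ℝ, 0 < l ∧ l < 1 ∧ l * N ≤ η / 2 := by
      refine ⟨min (1/2) (η / 2 / N), by positivity, ?_, ?_⟩
      · exact (min_le_left _ _).trans_lt (by norm_num)
      · calc _ ≤ η / 2 / N * N := by gcongr; exact min_le_right _ _
          _ = _ := by field_simp
    have hlog : 0 < - Real.log l := by linarith [Real.log_neg hl hl1]
    obtain ⟨M, hM⟩ := H (η / 2 / (-Real.log l)) (ε / 2) (by positivity) (by linarith)
    set δ := η / 2 / (-Real.log l) with hδ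
    have hδl : δ * (-Real.log l) = η / 2 := by rw [hδ]; exact div_mul_cancel₀ _ hlog.ne'
    apply limsup_le_of_le
    · isBoundedDefault
    filter_upwards [eventually_gt_atTop M, eventually_gt_atTop 0] with n hn hn0
    rw [EReal.coe_le_coe_iff]
    have hn0' : (0:ℝ) < n := by exact_mod_cast hn0
    rw [div_le_iff₀ hn0']
    let code : X → (Fin n → Option F) := fun y j =>
      if ε / 2 < dist (f^[j] y) p then some (c (f^[j] y)) else none
    let T : Finset (Fin n → Option F) := Finset.univ.filter
      (fun g => ((Finset.univ.filter (fun j => g j ≠ none)).card : ℝ) ≤ δ * n)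
    have hT : ∀ y, code y ∈ T := by
      intro y
      simp only [T, Finset.mem_filter, Finset.mem_univ, true_and]
      refine le_trans ?_ (hM n hn y)
      apply Nat.cast_le.2
      apply Finset.card_le_card_of_injOn (fun j : Fin n => (j : ℕ))
      · intro j hj
        simp only [Finset.coe_filter, Finset.mem_univ, true_and, Set.mem_ofPred_eq, code] at hj
        simp only [Finset.coe_filter, Finset.mem_range, Set.mem_ofPred_eq]
        refine ⟨j.2, ?_⟩
        by_contra h
        exact hj (if_neg h)
      · intro a _ b _ h
        exact Fin.ext h
    have h1 : sepNum f Set.univ n ε ≤ T.card := by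
      apply aux_sepNum_le f n ε T code hT
      intro y y' h j hj
      have h1 := congrFun h ⟨j, hj⟩
      simp only [code] at h1
      split_ifs at h1 with h2 h3 h3
      · rw [Option.some.injEq] at h1
        have h2 := hc (f^[j] y)
        have h3 := hc (f^[j] y')
        rw [← h1] at h3
        have := dist_triangle_right (f^[j] y) (f^[j] y') (c (f^[j] y))
        linarith
      · have := dist_triangle_right (f^[j] y) (f^[j] y') p
        linarith
    have h2 := aux_code_count none n T (δ * n) (by intro g hg; simpa [T] using hg) l hl hl1.le
    rcases Nat.eq_zero_or_pos (sepNum f Set.univ n ε) with h0 | h0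
    · rw [h0]; simp; positivity
    have hs : (0:ℝ) < sepNum f Set.univ n ε := by exact_mod_cast h0
    have hT0 : (0:ℝ) < T.card := by exact_mod_cast (h0.trans_le h1)
    have h3 : Real.log (sepNum f Set.univ n ε) ≤ Real.log T.card :=
      Real.log_le_log hs (by exact_mod_cast h1)
    have h4 := Real.log_le_log (by positivity) h2
    rw [Real.log_exp, Real.log_mul hT0.ne' (by positivity), Real.log_rpow hl] at h4
    have h5 : n * (l * N) ≤ n * (η / 2) := by gcongr
    have h6 : δ * n * Real.log l = - (η / 2 * n) := by rw [← hδl]; ring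
    change _ ≤ n * (l * N) at h4
    linarith
  · refine le_trans ?_ (le_iSup₂ (f := fun (ε : ℝ) (_ : (0:ℝ) < ε) => entScale f Set.univ ε)
      1 one_pos)
    apply le_limsup_of_frequently_le
    · apply Eventually.frequently
      refine Eventually.of_forall fun n => ?_
      have : (0:ℝ) ≤ Real.log (sepNum f Set.univ n 1) / n :=
        div_nonneg (Real.log_natCast_nonneg _) (by positivity)
      exact_mod_cast this
    · isBoundedDefault

theorem aux_emp {X : Type*} [MeasurableSpace X] (f : X → X) (x : X) (n : ℕ) (hn : 0 < n) :
    IsProbabilityMeasure ((n : ENNReal)⁻¹ • ∑ j ∈ Finset.range n, Measure.dirac (f^[j] x)) := by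
  constructor
  simp only [Measure.smul_apply, Measure.finsetSum_apply, measure_univ, Finset.sum_const,
    Finset.card_range, nsmul_eq_mul, mul_one, smul_eq_mul]
  exact ENNReal.inv_mul_cancel (by exact_mod_cast hn.ne') (by simp)

theorem aux_emp_int {X : Type*} [MetricSpace X] [MeasurableSpace X] [BorelSpace X]
    (f : X → X) (x : X) (n : ℕ) (g : X → ℝ) (hg : Continuous g) :
    ∫ y, g y ∂((n : ENNReal)⁻¹ • ∑ j ∈ Finset.range n, Measure.dirac (f^[j] x)) =
      (n : ℝ)⁻¹ * birkhoffSum f g n x := by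
  rw [integral_smul_measure, integral_finsetSum_measure]
  · simp [birkhoffSum]
  · intro i _
    exact integrable_dirac (by simp)

theorem aux_freq {X : Type*} [MetricSpace X] [CompactSpace X] [MeasurableSpace X] [BorelSpace X]
    (f : X → X) (hf : Continuous f) (p : X)
    (H : ∀ μ : Measure X, IsProbabilityMeasure μ → Measure.map f μ = μ → μ = Measure.dirac p)
    (δ ε : ℝ) (hδ : 0 < δ) (hε : 0 < ε) : ∃ M : ℕ, ∀ n : ℕ, M < n → ∀ x : X,
      (((Finset.range n).filter (fun j => ε < dist (f^[j] x) p)).card : ℝ) ≤ δ * n := by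
  by_contra hcon
  push Not at hcon
  choose n hn x hx using hcon
  have hn0 : ∀ k, 0 < n k := fun k => (Nat.zero_le k).trans_lt (hn k)
  have hntop : Tendsto n atTop atTop := tendsto_atTop_mono (fun k => (hn k).le) tendsto_id
  let ν : ℕ → ProbabilityMeasure X := fun k => ⟨_, aux_emp f (x k) (n k) (hn0 k)⟩
  have hν : ∀ (k : ℕ) (g : X → ℝ), Continuous g →
      ∫ y, g y ∂(ν k : Measure X) = (n k : ℝ)⁻¹ * birkhoffSum f g (n k) (x k) :=
    fun k g hg => aux_emp_int f (x k) (n k) g hg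
  let U : Ultrafilter ℕ := Ultrafilter.of atTop
  have hU : (U : Filter ℕ) ≤ atTop := Ultrafilter.of_le atTop
  obtain ⟨μ, -, hμ⟩ := (isCompact_univ (X := ProbabilityMeasure X)).ultrafilter_le_nhds
    (U.map ν) (by simp)
  have hμ' : Tendsto ν U (nhds μ) := hμ
  rw [ProbabilityMeasure.tendsto_iff_forall_integral_tendsto] at hμ'
  have hlim : ∀ g : X → ℝ, Continuous g → Tendsto
      (fun k => (n k : ℝ)⁻¹ * birkhoffSum f g (n k) (x k)) U (nhds (∫ y, g y ∂(μ : Measure X))) := by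
    intro g hg
    have := hμ' (BoundedContinuousFunction.mkOfCompact ⟨g, hg⟩)
    simp only [BoundedContinuousFunction.mkOfCompact_apply, ContinuousMap.coe_mk] at this
    refine this.congr fun k => ?_
    exact hν k g hg
  have hinv : Measure.map f (μ : Measure X) = μ := by
    have : IsProbabilityMeasure (Measure.map f (μ : Measure X)) :=
      Measure.isProbabilityMeasure_map hf.aemeasurable
    apply ext_of_forall_integral_eq_of_IsFiniteMeasure
    intro g
    rw [integral_map hf.aemeasurable g.continuous.aestronglyMeasurable]
    have h1 := (hlim (fun y => g (f y)) (g.continuous.comp hf)).sub (hlim g g.continuous)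
    have h2 : Tendsto (fun k => (n k : ℝ)⁻¹ * birkhoffSum f (fun y => g (f y)) (n k) (x k) -
        (n k : ℝ)⁻¹ * birkhoffSum f g (n k) (x k)) U (nhds 0) := by
      have h3 : Tendsto (fun k => (n k : ℝ)⁻¹ * (2 * ‖g‖)) U (nhds 0) := by
        have := ((tendsto_inv_atTop_nhds_zero_nat (𝕜 := ℝ)).comp hntop).mul_const (2 * ‖g‖)
        rw [zero_mul] at this
        exact this.mono_left hU
      apply squeeze_zero_norm _ h3
      intro k
      rw [← mul_sub]
      have h4 : birkhoffSum f (fun y => g (f y)) (n k) (x k) - birkhoffSum f g (n k) (x k)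
          = g (f^[n k] (x k)) - g (x k) := by
        rw [← birkhoffSum_apply_sub_birkhoffSum]
        congr 1
        unfold birkhoffSum
        apply Finset.sum_congr rfl
        intro j _
        simp only []
        rw [← Function.iterate_succ_apply' f, Function.iterate_succ_apply]
      rw [h4, norm_mul, norm_inv, Real.norm_natCast]
      gcongr
      calc _ ≤ ‖g (f^[n k] (x k))‖ + ‖g (x k)‖ := norm_sub_le _ _
        _ ≤ ‖g‖ + ‖g‖ := add_le_add (g.norm_coe_le_norm _) (g.norm_coe_le_norm _)
        _ = _ := by ring
    have := tendsto_nhds_unique h1 h2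
    linarith
  have hdir := H μ inferInstance hinv
  have h1 := hlim (fun y => dist y p) (by fun_prop)
  rw [hdir, integral_dirac, dist_self] at h1
  have h2 : ∀ k, δ * ε ≤ (n k : ℝ)⁻¹ * birkhoffSum f (fun y => dist y p) (n k) (x k) := by
    intro k
    have hk : (0:ℝ) < n k := by exact_mod_cast hn0 k
    rw [← div_eq_inv_mul, le_div_iff₀ hk]
    unfold birkhoffSum
    calc δ * ε * n k = δ * n k * ε := by ring
      _ ≤ ((Finset.range (n k)).filter (fun j => ε < dist (f^[j] (x k)) p)).card * ε := by
        gcongr; exact (hx k).le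
      _ ≤ ∑ j ∈ (Finset.range (n k)).filter (fun j => ε < dist (f^[j] (x k)) p),
            dist (f^[j] (x k)) p := by
        rw [← nsmul_eq_mul]
        apply Finset.card_nsmul_le_sum
        intro j hj
        exact (Finset.mem_filter.1 hj).2.le
      _ ≤ _ := Finset.sum_le_sum_of_subset_of_nonneg (Finset.filter_subset _ _)
        (fun _ _ _ => dist_nonneg)
  have h3 := ge_of_tendsto' h1 h2
  have : 0 < δ * ε := by positivity
  linarith

theorem aux_app {X : Type*} [MetricSpace X] (f : X → X) (p : X) (hp : f p = p)
    (H : ∀ δ ε : ℝ, 0 < δ → 0 < ε → ∃ M : ℕ, ∀ n : ℕ, M < n → ∀ x : X,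
      (((Finset.range n).filter (fun j => ε < dist (f^[j] x) p)).card : ℝ) ≤ δ * n) :
    ApproxProduct f := by
  intro δ₁ δ₂ ε h1 h2 h3
  obtain ⟨M, hM⟩ := H δ₂ ε h2 h3
  refine ⟨M, fun n hn C => ⟨fun _ => 1, fun _ => one_pos, fun _ => ?_, p, fun k => ?_⟩⟩
  · have : 0 ≤ δ₁ * n := by positivity
    simpa using this
  · have := hM n hn (C k)
    simp only [Function.iterate_fixed hp, dist_comm p]
    exact this

/-- A non-Dirac invariant measure yields orbit segments far from `p` a positive fraction
of the time. -/
theorem aux_far {X : Type*} [MetricSpace X] [MeasurableSpace X] [BorelSpace X]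
    (f : X → X) (hf : Continuous f) (p : X) (μ : Measure X) [IsProbabilityMeasure μ]
    (hμ : Measure.map f μ = μ) (hne : μ ≠ Measure.dirac p) :
    ∃ c ε : ℝ, 0 < c ∧ c ≤ 1 ∧ 0 < ε ∧ ∀ n : ℕ, ∃ x : X,
      c * n ≤ (((Finset.range n).filter (fun j => ε < dist (f^[j] x) p)).card : ℝ) := by
  obtain ⟨ε, hε, hpos⟩ : ∃ ε : ℝ, 0 < ε ∧ μ {y | ε < dist y p} ≠ 0 := by
    by_contra hcon
    push Not at hcon
    have hz : μ {p}ᶜ = 0 := by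
      have : ({p}ᶜ : Set X) ⊆ ⋃ m : ℕ, {y | 1 / ((m : ℝ) + 1) < dist y p} := by
        intro y hy
        obtain ⟨m, hm⟩ := exists_nat_one_div_lt (dist_pos.2 hy)
        exact Set.mem_iUnion.2 ⟨m, hm⟩
      refine measure_mono_null this (measure_iUnion_null fun m => hcon _ (by positivity))
    have h1 : ∀ᵐ y ∂μ, y = p := by
      rw [ae_iff]; exact hz
    apply hne
    have h2 : μ.map id = μ.map (fun _ => p) := Measure.map_congr h1
    simpa using h2
  have hA : MeasurableSet {y | ε < dist y p} := measurableSet_lt (by fun_prop) (by fun_prop)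
  refine ⟨μ.real {y | ε < dist y p}, ε, ?_, measureReal_le_one, hε, fun n => ?_⟩
  · exact ENNReal.toReal_pos hpos (measure_ne_top _ _)
  have hmp : MeasurePreserving f μ μ := ⟨hf.measurable, hμ⟩
  have hint : ∀ j, Integrable (fun x => ({y | ε < dist y p}.indicator (fun _ => (1:ℝ))) (f^[j] x)) μ := by
    intro j
    have : Integrable ({y | ε < dist y p}.indicator (fun _ => (1:ℝ))) μ :=
      (integrable_const 1).indicator hA
    exact (hmp.iterate j).integrable_comp_of_integrable this
  obtain ⟨x, hx⟩ := exists_integral_le (μ := μ) (f := fun x => ∑ j ∈ Finset.range n,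
    ({y | ε < dist y p}.indicator (fun _ => (1:ℝ))) (f^[j] x)) (integrable_finsetSum _ fun j _ => hint j)
  refine ⟨x, ?_⟩
  rw [integral_finsetSum _ fun j _ => hint j] at hx
  have h1 : ∀ j, ∫ x, ({y | ε < dist y p}.indicator (fun _ => (1:ℝ))) (f^[j] x) ∂μ
      = μ.real {y | ε < dist y p} := by
    intro j
    have h2 : (fun x => ({y | ε < dist y p}.indicator (fun _ => (1:ℝ))) (f^[j] x)) =
      (f^[j] ⁻¹' {y | ε < dist y p}).indicator (fun _ => (1:ℝ)) := by
      ext x; simp [Set.indicator]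
    rw [h2, integral_indicator_const _ ((hmp.iterate j).measurable hA)]
    rw [measureReal_def, (hmp.iterate j).measure_preimage hA.nullMeasurableSet, smul_eq_mul,
      mul_one, measureReal_def]
  simp only [h1, Finset.sum_const, Finset.card_range, nsmul_eq_mul] at hx
  rw [mul_comm]
  refine hx.trans (le_of_eq ?_)
  simp [Set.indicator]

/-- rough gap code -/
theorem aux_rough (τ : ℕ → ℕ) (L : ℕ) (hL : 0 < L) (h : ∀ k, 20 * τ k ≤ L) (k : ℕ) :
    ((∑ i ∈ Finset.range (k + 1), τ i) / L = (∑ i ∈ Finset.range k, τ i) / L +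
      if (∑ i ∈ Finset.range k, τ i) / L ≠ (∑ i ∈ Finset.range (k + 1), τ i) / L then 1 else 0) := by
  rw [Finset.sum_range_succ]
  set D := ∑ i ∈ Finset.range k, τ i
  have h1 := h k
  have h2 : D / L ≤ (D + τ k) / L := Nat.div_le_div_right (by omega)
  have h3 : (D + τ k) / L ≤ D / L + 1 := by
    rw [← Nat.add_div_right _ hL]
    exact Nat.div_le_div_right (by omega)
  split_ifs <;> omega

theorem aux_rough_card (τ : ℕ → ℕ) (L : ℕ) (hL : 0 < L) (h : ∀ k, 20 * τ k ≤ L) (K : ℕ) :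
    20 * ((Finset.range K).filter (fun k => (∑ i ∈ Finset.range k, τ i) / L ≠
      (∑ i ∈ Finset.range (k + 1), τ i) / L)).card ≤ K := by
  have h1 : ∀ k, ((Finset.range k).filter (fun k => (∑ i ∈ Finset.range k, τ i) / L ≠
      (∑ i ∈ Finset.range (k + 1), τ i) / L)).card = (∑ i ∈ Finset.range k, τ i) / L := by
    intro k
    induction k with
    | zero => simp
    | succ k ih =>
      rw [aux_rough τ L hL h k, Finset.card_filter, Finset.sum_range_succ, ← Finset.card_filter, ih]
  rw [h1]
  have h2 : 20 * ∑ i ∈ Finset.range K, τ i ≤ K * L := by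
    rw [Finset.mul_sum]
    calc _ ≤ ∑ i ∈ Finset.range K, L := Finset.sum_le_sum fun i _ => h i
      _ = _ := by simp
  have h3 := Nat.div_mul_le_self (∑ i ∈ Finset.range K, τ i) L
  have h4 : (20 * ((∑ i ∈ Finset.range K, τ i) / L)) * L ≤ K * L := by
    rw [mul_assoc]; omega
  exact Nat.le_of_mul_le_mul_right h4 hL

theorem aux_rough_eq (τ τ' : ℕ → ℕ) (L : ℕ) (hL : 0 < L) (h : ∀ k, 20 * τ k ≤ L)
    (h' : ∀ k, 20 * τ' k ≤ L) (K : ℕ)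
    (hc : ∀ k < K, ((∑ i ∈ Finset.range k, τ i) / L ≠ (∑ i ∈ Finset.range (k + 1), τ i) / L ↔
      (∑ i ∈ Finset.range k, τ' i) / L ≠ (∑ i ∈ Finset.range (k + 1), τ' i) / L)) (k : ℕ)
    (hk : k ≤ K) : ∑ i ∈ Finset.range k, τ i ≤ ∑ i ∈ Finset.range k, τ' i + L := by
  have h1 : (∑ i ∈ Finset.range k, τ i) / L = (∑ i ∈ Finset.range k, τ' i) / L := by
    induction k with
    | zero => simp
    | succ k ih =>
      have ih := ih (by omega)
      rw [aux_rough τ L hL h k, aux_rough τ' L hL h' k, ih, ← ih]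
      simp only [hc k (by omega)]
      rw [ih]
  have h2 := Nat.div_add_mod (∑ i ∈ Finset.range k, τ i) L
  have h3 := Nat.div_add_mod (∑ i ∈ Finset.range k, τ' i) L
  have h4 := Nat.mod_lt (∑ i ∈ Finset.range k, τ i) hL
  rw [h1] at h2
  omega

theorem aux_sepstep {X : Type*} [MetricSpace X] (f : X → X) (p x z z' : X) (n L s s' : ℕ)
    (c ε : ℝ) (hε : 0 < ε)
    (hs : s ≤ s' + L) (hs' : s' ≤ s + L) (hL : (L : ℝ) ≤ c / 8 * n) (hcn : 0 < c * n)
    (h1 : (((Finset.range n).filter (fun j => ε < dist (f^[s + j] z) p)).card : ℝ) ≤ c / 8 * n)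
    (h2 : (((Finset.range n).filter
      (fun j => ε < dist (f^[s' + j] z') (f^[j] x))).card : ℝ) ≤ c / 8 * n)
    (h3 : c * n ≤ (((Finset.range n).filter (fun j => 4 * ε < dist (f^[j] x) p)).card : ℝ)) :
    ∃ j < n, ε < dist (f^[s' + j] z) (f^[s' + j] z') := by
  classical
  by_contra hcon
  push Not at hcon
  set B2 := (Finset.range n).filter (fun j => ε < dist (f^[s' + j] z') (f^[j] x))
  set B1 := (Finset.range n).filter (fun j => ε < dist (f^[s + j] z) p)
  set G := (Finset.range n).filter (fun j => 4 * ε < dist (f^[j] x) p)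
  let E := (Finset.range n).filter (fun j => s' + j < s ∨ s + n ≤ s' + j)
  let B3 := (Finset.range n).filter
    (fun j => (s ≤ s' + j ∧ s' + j < s + n) ∧ ε < dist (f^[s' + j] z) p)
  have hG : G ⊆ B2 ∪ E ∪ B3 := by
    intro j hj
    simp only [G, Finset.mem_filter, Finset.mem_range] at hj
    simp only [B2, E, B3, Finset.mem_union, Finset.mem_filter, Finset.mem_range]
    by_contra hno
    push Not at hno
    obtain ⟨⟨ha, hb⟩, hd⟩ := hno
    have ha := ha hj.1
    have hb := hb hj.1
    have hd := hd hj.1 ⟨hb.1, hb.2⟩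
    have he := hcon j hj.1
    have t1 := dist_triangle (f^[j] x) (f^[s' + j] z) p
    have t2 := dist_triangle_right (f^[j] x) (f^[s' + j] z) (f^[s' + j] z')
    rw [dist_comm] at ha
    linarith [hj.2]
  have hE : E.card ≤ L := by
    rcases le_total s' s with h | h
    · have : E ⊆ Finset.range (s - s') := by
        intro j hj
        simp only [E, Finset.mem_filter, Finset.mem_range] at hj ⊢
        omega
      have := Finset.card_le_card this
      rw [Finset.card_range] at this
      omega
    · have : E ⊆ Finset.Ico (n - (s' - s)) n := by
        intro j hj
        simp only [E, Finset.mem_filter, Finset.mem_range, Finset.mem_Ico] at hj ⊢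
        omega
      have := Finset.card_le_card this
      rw [Nat.card_Ico] at this
      omega
  have hB3 : B3.card ≤ B1.card := by
    apply Finset.card_le_card_of_injOn (fun j => s' + j - s)
    · intro j hj
      simp only [B3, Finset.coe_filter, Finset.mem_range, Set.mem_ofPred_eq] at hj
      simp only [B1, Finset.coe_filter, Finset.mem_range, Set.mem_ofPred_eq]
      refine ⟨by omega, ?_⟩
      rw [show s + (s' + j - s) = s' + j by omega]
      exact hj.2.2
    · intro a ha b hb hab
      simp only [B3, Finset.coe_filter, Finset.mem_range, Set.mem_ofPred_eq] at ha hb hab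
      omega
  have h4 : G.card ≤ B2.card + L + B1.card := by
    have := Finset.card_le_card hG
    have u1 := Finset.card_union_le (B2 ∪ E) B3
    have u2 := Finset.card_union_le B2 E
    omega
  have h5 : (G.card : ℝ) ≤ B2.card + L + B1.card := by exact_mod_cast h4
  linarith

theorem aux_segStart (n : ℕ) (t : ℕ → ℕ) (ht : ∀ k, 0 < t k) (k : ℕ) :
    segStart (fun _ => n) t k = k * n + ∑ i ∈ Finset.range k, (t i - 1) := by
  unfold segStart
  have : ∀ i ∈ Finset.range k, n + t i - 1 = n + (t i - 1) := by
    intro i _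
    have := ht i
    omega
  rw [Finset.sum_congr rfl this, Finset.sum_add_distrib]
  simp

theorem aux_count {X : Type*} [MetricSpace X] [CompactSpace X] (f : X → X)
    (p x : X) (hp : f p = p) (n L : ℕ) (c ε : ℝ) (hε : 0 < ε) (hL0 : 0 < L) (hLn : L ≤ n)
    (hL : (L : ℝ) ≤ c / 8 * n) (hcn : 0 < c * n)
    (h3 : c * n ≤ (((Finset.range n).filter (fun j => 4 * ε < dist (f^[j] x) p)).card : ℝ))
    (happ : ∀ C : ℕ → X, ∃ t : ℕ → ℕ, (∀ k, 0 < t k) ∧ (∀ k, 20 * (t k - 1) ≤ L) ∧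
        ∃ z : X, Traced f C (fun _ => n) t (c / 8) ε z) (K : ℕ) :
    2 ^ K ≤ (sepNum f Set.univ (2 * n * K) ε) *
      (Finset.univ.filter (fun g : Fin K → Bool =>
        ((Finset.univ.filter (fun j => g j ≠ false)).card : ℝ) ≤ K / 20)).card := by
  classical
  choose t ht0 htL z hz using happ
  let C : (Fin K → Bool) → ℕ → X := fun w k => if h : k < K then (if w ⟨k, h⟩ then x else p) else p
  let code : (Fin K → Bool) → (Fin K → Bool) := fun w j =>
    decide ((∑ i ∈ Finset.range j, (t (C w) i - 1)) / L ≠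
      (∑ i ∈ Finset.range (j + 1), (t (C w) i - 1)) / L)
  have hcard : (2:ℕ) ^ K = (Finset.univ : Finset (Fin K → Bool)).card := by simp
  -- separation
  have hsep1 : ∀ w w' : Fin K → Bool, code w = code w' → ∀ k : Fin K, w k = false → w' k = true →
      ∃ j < 2 * n * K, ε < dist (f^[j] (z (C w))) (f^[j] (z (C w'))) := by
    intro w w' hc k hk hk'
    have hcc : ∀ i < K, ((∑ i ∈ Finset.range i, (t (C w) i - 1)) / L ≠
        (∑ i ∈ Finset.range (i + 1), (t (C w) i - 1)) / L ↔
      (∑ i ∈ Finset.range i, (t (C w') i - 1)) / L ≠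
        (∑ i ∈ Finset.range (i + 1), (t (C w') i - 1)) / L) := by
      intro i hi
      have := congrFun hc ⟨i, hi⟩
      simpa only [code, decide_eq_decide] using this
    have e1 := aux_rough_eq (fun i => t (C w) i - 1) (fun i => t (C w') i - 1) L hL0
      (htL _) (htL _) K hcc k k.2.le
    have e2 := aux_rough_eq (fun i => t (C w') i - 1) (fun i => t (C w) i - 1) L hL0
      (htL _) (htL _) K (fun i hi => (hcc i hi).symm) k k.2.le
    have z1 := hz (C w) k
    have z2 := hz (C w') k
    have hC : C w k = p := by simp [C, hk]
    have hC' : C w' k = x := by simp [C, hk']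
    rw [hC] at z1
    rw [hC'] at z2
    simp only [Function.iterate_fixed hp] at z1
    have g1 := aux_segStart n (t (C w)) (ht0 _) k
    have g2 := aux_segStart n (t (C w')) (ht0 _) k
    obtain ⟨j, hj, hd⟩ := aux_sepstep f p x (z (C w)) (z (C w')) n L
      (segStart (fun _ => n) (t (C w)) k) (segStart (fun _ => n) (t (C w')) k) c ε hε
      (by omega) (by omega) hL hcn z1 z2 h3
    refine ⟨_, ?_, hd⟩
    have b1 : ∑ i ∈ Finset.range k, (t (C w') i - 1) ≤ k * n := by
      calc _ ≤ ∑ i ∈ Finset.range k, n := Finset.sum_le_sum fun i _ => by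
            have := htL (C w') i
            omega
        _ = _ := by simp
    have b2 : ((k:ℕ) + 1) * n ≤ K * n := Nat.mul_le_mul_right _ k.2
    rw [add_mul] at b2
    rw [g2, show 2 * n * K = K * n + K * n by ring]
    omega
  have hsep : ∀ w w' : Fin K → Bool, code w = code w' → w ≠ w' →
      ∃ j < 2 * n * K, ε < dist (f^[j] (z (C w))) (f^[j] (z (C w'))) := by
    intro w w' hc hne
    obtain ⟨k, hk⟩ := Function.ne_iff.1 hne
    rcases hb : w k with _ | _
    · exact hsep1 w w' hc k hb (by cases h : w' k <;> simp_all)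
    · obtain ⟨j, hj, hd⟩ := hsep1 w' w hc.symm k (by cases h : w' k <;> simp_all) hb
      exact ⟨j, hj, by rwa [dist_comm]⟩
  rw [hcard]
  apply Finset.card_le_mul_card_image_of_maps_to (f := code)
  · intro w _
    simp only [Finset.mem_filter, Finset.mem_univ, true_and]
    have h1 := aux_rough_card (fun i => t (C w) i - 1) L hL0 (htL _) K
    have h2 : (Finset.univ.filter (fun j => code w j ≠ false)).card ≤
        ((Finset.range K).filter (fun k => (∑ i ∈ Finset.range k, (t (C w) i - 1)) / L ≠
      (∑ i ∈ Finset.range (k + 1), (t (C w) i - 1)) / L)).card := by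
      apply Finset.card_le_card_of_injOn (fun j : Fin K => (j : ℕ))
      · intro j hj
        simp only [Finset.coe_filter, Finset.mem_univ, true_and, Set.mem_ofPred_eq, code,
          ne_eq, decide_eq_false_iff_not, not_not] at hj
        simp only [Finset.coe_filter, Finset.mem_range, Set.mem_ofPred_eq]
        exact ⟨j.2, hj⟩
      · intro a _ b _ h
        exact Fin.ext h
    have h3 : 20 * (Finset.univ.filter (fun j => code w j ≠ false)).card ≤ K := by
      omega
    have h4 : (20:ℝ) * (Finset.univ.filter (fun j => code w j ≠ false)).card ≤ K := by
      exact_mod_cast h3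
    linarith
  · intro g _
    have hinj : Set.InjOn (fun w => z (C w))
        (Finset.univ.filter (fun w => code w = g) : Finset (Fin K → Bool)) := by
      intro w hw w' hw' heq
      by_contra hne
      simp only [Finset.coe_filter, Finset.mem_univ, true_and, Set.mem_ofPred_eq] at hw hw' heq
      obtain ⟨j, _, hd⟩ := hsep w w' (hw.trans hw'.symm) hne
      rw [heq, dist_self] at hd
      linarith
    rw [← Finset.card_image_of_injOn hinj]
    apply aux_sep_le_sepNum f _ ε hε
    intro y hy y' hy' hne
    simp only [Finset.mem_image, Finset.mem_filter, Finset.mem_univ, true_and] at hy hy'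
    obtain ⟨w, hw, rfl⟩ := hy
    obtain ⟨w', hw', rfl⟩ := hy'
    exact hsep w w' (hw.trans hw'.symm) (fun h => hne (by rw [h]))

theorem aux_pos_entropy {X : Type*} [MetricSpace X] [CompactSpace X] (f : X → X)
    (p : X) (hp : f p = p) (happ : ApproxProduct f) (c ε : ℝ) (hc : 0 < c) (hc1 : c ≤ 1)
    (hε : 0 < ε) (H : ∀ n : ℕ, ∃ x : X,
      c * n ≤ (((Finset.range n).filter (fun j => 4 * ε < dist (f^[j] x) p)).card : ℝ)) :
    0 < topEnt f := by
  obtain ⟨M, hM⟩ := happ (c / 320) (c / 8) ε (by positivity) (by positivity) hε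
  obtain ⟨n, hnM, hn16⟩ : ∃ n : ℕ, M < n ∧ 16 / c ≤ n := by
    obtain ⟨m, hm⟩ := exists_nat_ge (16 / c)
    exact ⟨max (M + 1) m, by omega, hm.trans (by exact_mod_cast le_max_right _ _)⟩
  rw [div_le_iff₀ hc] at hn16
  have hcn : (16:ℝ) ≤ c * n := by linarith
  have hn0 : (0:ℝ) < n := by
    by_contra h
    have : (n:ℝ) ≤ 0 := not_lt.1 h
    nlinarith
  have hL1 : ((⌊c / 8 * n⌋₊ : ℕ) : ℝ) ≤ c / 8 * n := Nat.floor_le (by positivity)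
  have hL2 := Nat.lt_floor_add_one (c / 8 * n)
  set L := ⌊c / 8 * n⌋₊
  have hL3 : c * n / 16 ≤ L := by linarith
  have hL0 : 0 < L := by
    have : (0:ℝ) < L := by linarith
    exact_mod_cast this
  have hLn : L ≤ n := by
    have : (L:ℝ) ≤ n := by nlinarith
    exact_mod_cast this
  obtain ⟨x, hx⟩ := H n
  have key := aux_count f p x hp n L c ε hε hL0 hLn hL1 (by linarith) hx (by
    intro C
    obtain ⟨t, ht0, ht, z, hz⟩ := hM n hnM C
    refine ⟨t, ht0, fun k => ?_, z, hz⟩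
    have h1 := ht k
    have h2 : ((t k - 1 : ℕ) : ℝ) = t k - 1 := by
      rw [Nat.cast_sub (ht0 k)]; simp
    have h3 : (20:ℝ) * ((t k - 1 : ℕ) : ℝ) ≤ L := by rw [h2]; linarith
    exact_mod_cast h3)
  have hlow : ∀ K : ℕ, (2 / 5 : ℝ) * K ≤ Real.log (sepNum f Set.univ (2 * n * K) ε) := by
    intro K
    have k1 := key K
    have k2 := aux_code_count false K (Finset.univ.filter (fun g : Fin K → Bool =>
        ((Finset.univ.filter (fun j => g j ≠ false)).card : ℝ) ≤ K / 20)) (K / 20)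
        (by intro g hg; exact (Finset.mem_filter.1 hg).2) (1 / 16) (by norm_num) (by norm_num)
    set T := (Finset.univ.filter (fun g : Fin K → Bool =>
        ((Finset.univ.filter (fun j => g j ≠ false)).card : ℝ) ≤ K / 20)).card
    set S := sepNum f Set.univ (2 * n * K) ε
    have hpos : 0 < S * T := lt_of_lt_of_le (by positivity) k1
    have hS : (0:ℝ) < S := by exact_mod_cast Nat.pos_of_mul_pos_right hpos
    have hT : (0:ℝ) < T := by exact_mod_cast Nat.pos_of_mul_pos_left hpos
    have k1' : (2:ℝ) ^ K ≤ S * T := by exact_mod_cast k1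
    have l1 := Real.log_le_log (by positivity) k1'
    rw [Real.log_pow, Real.log_mul hS.ne' hT.ne'] at l1
    have l2 := Real.log_le_log (by positivity) k2
    rw [Real.log_exp, Real.log_mul hT.ne' (by positivity), Real.log_rpow (by norm_num)] at l2
    have l3 : Real.log (1 / 16) = - (4 * Real.log 2) := by
      rw [show (1 / 16 : ℝ) = (2 ^ 4)⁻¹ by norm_num, Real.log_inv, Real.log_pow]
      norm_num
    rw [l3, Fintype.card_bool] at l2
    have l4 : (K:ℝ) * 0.6931471803 ≤ K * Real.log 2 := by
      gcongr; exact Real.log_two_gt_d9.le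
    have hK : (0:ℝ) ≤ K := by positivity
    push_cast at l2
    nlinarith
  have hmain : ((1 / 5 / n : ℝ) : EReal) ≤ entScale f Set.univ ε := by
    apply le_limsup_of_frequently_le
    · rw [frequently_atTop]
      intro N
      have hn1 : 0 < n := by exact_mod_cast hn0
      refine ⟨2 * n * (N + 1), ?_, ?_⟩
      · nlinarith
      · rw [EReal.coe_le_coe_iff]
        have h1 := hlow (N + 1)
        rw [le_div_iff₀ (by positivity)]
        refine le_trans (le_of_eq ?_) h1
        push_cast
        field_simp
    · isBoundedDefault
  have h0 : (0 : EReal) < ((1 / 5 / n : ℝ) : EReal) := by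
    have : (0:ℝ) < 1 / 5 / n := by positivity
    exact_mod_cast this
  exact (h0.trans_le hmain).trans_le
    (le_iSup₂ (f := fun (ε : ℝ) (_ : (0:ℝ) < ε) => entScale f Set.univ ε) ε hε)

/-- **Proposition 5.1 (Sun).** Suppose the compact system `(X, f)` has a fixed point
`p`. Then `(X, f)` has the approximate product property and zero topological entropy
if and only if the Dirac measure `δ_p` is the unique `f`-invariant Borel probability
measure on `X`. -/
theorem app_zero_entropy_iff_dirac_uniquelyErgodic_of_fixed_point
    {X : Type*} [MetricSpace X] [CompactSpace X] [MeasurableSpace X] [BorelSpace X]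
    (f : X → X) (hf : Continuous f) (p : X) (hp : f p = p) :
    (ApproxProduct f ∧ topEnt f = 0) ↔
      (∀ μ : Measure X,
        (IsProbabilityMeasure μ ∧ Measure.map f μ = μ) ↔ μ = Measure.dirac p) := by

  constructor
  · rintro ⟨happ, hent⟩ μ
    constructor
    · rintro ⟨hprob, hinv⟩
      by_contra hne
      obtain ⟨c, ε, hc, hc1, hε, H⟩ := aux_far f hf p μ hinv hne
      have := aux_pos_entropy f p hp happ c (ε / 4) hc hc1 (by linarith)
        (by simpa only [show 4 * (ε / 4) = ε by ring] using H)
      exact absurd hent this.ne'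
    · rintro rfl
      refine ⟨inferInstance, ?_⟩
      rw [Measure.map_dirac' hf.measurable, hp]
  · intro H
    have h := aux_freq f hf p (fun μ h1 h2 => (H μ).1 ⟨h1, h2⟩)
    exact ⟨aux_app f p hp h, aux_zero_entropy f p h⟩
end Defs
end

section
/- Let (X,d) be a compact metric space and f : X → X a continuous map with a fixed point p ∈ X (f(p) = p). If the Dirac measure δ_p is the unique f-invariant Borel probability measure on X, then (X,f) has the approximate product property; moreover, in this case every sequence can be traced with all gaps equal to 1, i.e. for all δ₂, ε > 0 there is M > 0 such that for every integer n > M and every sequence (x_k)_{k≥1} in X, ((x_k), (n)_{k≥1}, (1)_{k≥1}) is (δ₂,ε)-traced by p. -/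
open MeasureTheory Filter Set

section Defs

variable {X : Type*} [MetricSpace X]

lemma empirical_exists {X : Type*} [MetricSpace X] [CompactSpace X] [MeasurableSpace X]
    [BorelSpace X] (f : X → X) (x : X) (n : ℕ) (hn : 0 < n) :
    ∃ μ : ProbabilityMeasure X, ∀ g : X → ℝ, Continuous g →
      ∫ y, g y ∂(μ : Measure X) = (n : ℝ)⁻¹ * ∑ j ∈ Finset.range n, g (f^[j] x) := by
  have hn' : (n : ENNReal) ≠ 0 := by exact_mod_cast hn.ne'
  refine ⟨⟨(n : ENNReal)⁻¹ • ∑ j ∈ Finset.range n, Measure.dirac (f^[j] x), ⟨?_⟩⟩, ?_⟩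
  · simp [ENNReal.inv_mul_cancel hn' (ENNReal.natCast_ne_top n)]
  · intro g hg
    have hgi : ∀ ν : Measure X, IsProbabilityMeasure ν → Integrable g ν := fun ν _ =>
      (BoundedContinuousFunction.mkOfCompact ⟨g, hg⟩).integrable ν
    change ∫ y, g y ∂((n : ENNReal)⁻¹ • ∑ j ∈ Finset.range n, Measure.dirac (f^[j] x)) = _
    rw [integral_smul_measure, integral_finsetSum_measure (fun i _ => hgi _ inferInstance)]
    simp [integral_dirac]

lemma uniform_count {X : Type*} [MetricSpace X] [CompactSpace X] [MeasurableSpace X]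
    [BorelSpace X] (f : X → X) (hf : Continuous f) (p : X)
    (huniq : ∀ μ : Measure X, IsProbabilityMeasure μ → Measure.map f μ = μ →
      μ = Measure.dirac p) (δ ε : ℝ) (hδ : 0 < δ) (hε : 0 < ε) :
    ∃ M : ℕ, ∀ n : ℕ, M < n → ∀ x : X,
      (((Finset.range n).filter (fun j => ε < dist p (f^[j] x))).card : ℝ) ≤ δ * n := by
  by_contra! H
  choose n hn x hx using H
  have hpos : ∀ M, 0 < n M := fun M => (Nat.zero_le M).trans_lt (hn M)
  choose μ hμ using fun M => empirical_exists f (x M) (n M) (hpos M)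
  obtain ⟨ν, -, hν⟩ := isCompact_univ.ultrafilter_le_nhds
    (Ultrafilter.map μ (hyperfilter ℕ)) (by simp)
  have hlim : Tendsto μ (hyperfilter ℕ : Filter ℕ) (nhds ν) := hν
  have hat : (hyperfilter ℕ : Filter ℕ) ≤ atTop := Nat.hyperfilter_le_atTop
  rw [ProbabilityMeasure.tendsto_iff_forall_integral_tendsto] at hlim
  have hL : ∀ g : X → ℝ, Continuous g → Tendsto (fun M => ∫ y, g y ∂(μ M : Measure X))
      (hyperfilter ℕ : Filter ℕ) (nhds (∫ y, g y ∂(ν : Measure X))) := fun g hg =>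
    hlim (BoundedContinuousFunction.mkOfCompact ⟨g, hg⟩)
  have hninv : Tendsto (fun M => ((n M : ℝ))⁻¹) atTop (nhds 0) := by
    apply tendsto_inv_atTop_zero.comp
    apply tendsto_natCast_atTop_atTop.comp
    exact tendsto_atTop_mono (fun M => (hn M).le) tendsto_id
  have hinv : Measure.map f (ν : Measure X) = ν := by
    have : IsProbabilityMeasure (Measure.map f (ν : Measure X)) :=
      Measure.isProbabilityMeasure_map hf.aemeasurable
    apply ext_of_forall_integral_eq_of_IsFiniteMeasure
    intro g
    rw [integral_map hf.aemeasurable g.continuous.aestronglyMeasurable]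
    have h1 := (hL _ (g.continuous.comp hf)).sub (hL _ g.continuous)
    have h2 : Tendsto (fun M => ∫ y, (g ∘ f) y ∂(μ M : Measure X) - ∫ y, g y ∂(μ M : Measure X))
        atTop (nhds 0) := by
      have h3 : Tendsto (fun M => (n M : ℝ)⁻¹ * (2 * ‖g‖)) atTop (nhds 0) := by
        simpa using hninv.mul_const (2 * ‖g‖)
      refine squeeze_zero_norm (fun M => ?_) h3
      rw [hμ M _ (g.continuous.comp hf), hμ M _ g.continuous, ← mul_sub,
        ← Finset.sum_sub_distrib]
      have h4 : ∑ j ∈ Finset.range (n M), ((g ∘ f) (f^[j] (x M)) - g (f^[j] (x M)))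
          = g (f^[n M] (x M)) - g (x M) := by
        have h := Finset.sum_range_sub (fun j => g (f^[j] (x M))) (n M)
        simpa only [Function.iterate_succ_apply', Function.iterate_zero, id_eq,
          Function.comp_apply] using h
      rw [h4, norm_mul, norm_inv, Real.norm_natCast]
      gcongr
      calc ‖g (f^[n M] (x M)) - g (x M)‖ ≤ ‖g (f^[n M] (x M))‖ + ‖g (x M)‖ := norm_sub_le _ _
        _ ≤ ‖g‖ + ‖g‖ := add_le_add (g.norm_coe_le_norm _) (g.norm_coe_le_norm _)
        _ = 2 * ‖g‖ := by ring
    exact sub_eq_zero.1 (tendsto_nhds_unique h1 (h2.mono_left hat))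
  have hd := huniq ν inferInstance hinv
  have hc : Continuous (fun y => dist p y) := by fun_prop
  have h5 := hL _ hc
  rw [hd, integral_dirac, dist_self] at h5
  have h6 : δ * ε ≤ 0 := by
    refine ge_of_tendsto' h5 (fun M => ?_)
    rw [hμ M _ hc]
    have hnp : (0 : ℝ) < n M := by exact_mod_cast hpos M
    rw [inv_mul_eq_div, le_div_iff₀ hnp]
    calc δ * ε * n M = (δ * n M) * ε := by ring
      _ ≤ (((Finset.range (n M)).filter (fun j => ε < dist p (f^[j] (x M)))).card : ℝ) * ε := by
        gcongr; exact (hx M).le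
      _ = ∑ j ∈ (Finset.range (n M)).filter (fun j => ε < dist p (f^[j] (x M))), ε := by simp
      _ ≤ ∑ j ∈ (Finset.range (n M)).filter (fun j => ε < dist p (f^[j] (x M))),
            dist p (f^[j] (x M)) :=
        Finset.sum_le_sum fun j hj => (Finset.mem_filter.1 hj).2.le
      _ ≤ _ := Finset.sum_le_sum_of_subset_of_nonneg (Finset.filter_subset _ _)
        fun _ _ _ => dist_nonneg
  have := mul_pos hδ hε
  linarith

/-- If the compact system `(X, f)` has a fixed point `p` whose Dirac measure is the
unique `f`-invariant Borel probability measure, then `(X, f)` has the approximate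
product property; moreover every sequence can be traced by `p` itself, with all
gaps equal to `1`. -/
theorem app_of_dirac_uniquelyErgodic_fixed_point
    {X : Type*} [MetricSpace X] [CompactSpace X] [MeasurableSpace X] [BorelSpace X]
    (f : X → X) (hf : Continuous f) (p : X) (hp : f p = p)
    (huniq : ∀ μ : Measure X, IsProbabilityMeasure μ → Measure.map f μ = μ →
      μ = Measure.dirac p) :
    ApproxProduct f ∧
      ∀ δ₂ ε : ℝ, 0 < δ₂ → 0 < ε → ∃ M : ℕ, ∀ n : ℕ, M < n → ∀ C : ℕ → X,
        Traced f C (fun _ => n) (fun _ => 1) δ₂ ε p := by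
  have key : ∀ δ₂ ε : ℝ, 0 < δ₂ → 0 < ε → ∃ M : ℕ, ∀ n : ℕ, M < n → ∀ C : ℕ → X,
        Traced f C (fun _ => n) (fun _ => 1) δ₂ ε p := by
    intro δ ε hδ hε
    obtain ⟨M, hM⟩ := uniform_count f hf p huniq δ ε hδ hε
    refine ⟨M, fun n hn C k => ?_⟩
    have := hM n hn (C k)
    simpa only [Function.iterate_fixed hp] using this
  refine ⟨fun δ₁ δ₂ ε h₁ h₂ hε => ?_, key⟩
  obtain ⟨M, hM⟩ := key δ₂ ε h₂ hε
  refine ⟨M, fun n hn C => ⟨fun _ => 1, fun _ => one_pos, fun _ => ?_, p, hM n hn C⟩⟩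
  have : 0 ≤ δ₁ * n := by positivity
  push_cast
  linarith
end Defs
end

section
/- Let (X,d) be a compact metric space, f : X → X a continuous map, and N a positive integer. If the system (X, f^N) has the approximate product property, then so does (X, f). -/
open MeasureTheory Filter Set

section Defs

variable {X : Type*} [MetricSpace X]

theorem unif_iter_aux {X : Type*} [MetricSpace X] [CompactSpace X]
    (f : X → X) (hf : Continuous f) (N : ℕ) (ε : ℝ) (hε : 0 < ε) :
    ∃ η : ℝ, 0 < η ∧ ∀ i < N, ∀ x y : X, dist x y ≤ η → dist (f^[i] x) (f^[i] y) ≤ ε := by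
  induction N with
  | zero => exact ⟨1, one_pos, fun i hi => absurd hi (Nat.not_lt_zero i)⟩
  | succ N ih =>
    obtain ⟨η, hη, h⟩ := ih
    have hu : UniformContinuous (f^[N]) :=
      CompactSpace.uniformContinuous_of_continuous (hf.iterate N)
    obtain ⟨θ, hθ, h2⟩ := Metric.uniformContinuous_iff.1 hu ε hε
    refine ⟨min η (θ / 2), lt_min hη (half_pos hθ), fun i hi x y hxy => ?_⟩
    rcases Nat.lt_succ_iff_lt_or_eq.1 hi with h3 | h3
    · exact h i h3 x y (hxy.trans (min_le_left _ _))
    · subst h3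
      have : dist x y < θ := by
        have := hxy.trans (min_le_right _ _)
        linarith
      exact (h2 this).le

/-- **Proposition 5.3 (Sun).** If `(X, f^N)` has the approximate product property for
some positive integer `N`, then so does `(X, f)`. -/
theorem app_of_app_iterate
    {X : Type*} [MetricSpace X] [CompactSpace X]
    (f : X → X) (hf : Continuous f) (N : ℕ) (hN : 0 < N)
    (happ : ApproxProduct (f^[N])) :
    ApproxProduct f := by
  intro δ₁ δ₂ ε h1 h2 hε
  obtain ⟨η, hη, hu⟩ := unif_iter_aux f hf N ε hε
  obtain ⟨M, hM⟩ := happ (δ₁ / 2) (δ₂ / 2) η (half_pos h1) (half_pos h2) hη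
  obtain ⟨K, hK⟩ := exists_nat_ge (2 * N / δ₁ + N)
  refine ⟨K + N * M, fun n hn C => ?_⟩
  have hnK : (2 * N / δ₁ + N : ℝ) ≤ n := hK.trans (by
    exact_mod_cast (Nat.le_add_right _ _).trans hn.le)
  have hN' : (0 : ℝ) < N := by exact_mod_cast hN
  have hnN : (N : ℝ) ≤ n := by
    have : 0 ≤ 2 * N / δ₁ := by positivity
    linarith
  have hnd : 2 * N + N * δ₁ ≤ δ₁ * n := by
    have := mul_le_mul_of_nonneg_left hnK h1.le
    have e : δ₁ * (2 * N / δ₁ + N) = 2 * N + N * δ₁ := by field_simp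
    linarith
  set q := n / N + 1 with hq
  have hMq : M < q := by
    have : M ≤ n / N := (Nat.le_div_iff_mul_le hN).2 (by
      have := hn.le
      rw [mul_comm]
      omega)
    omega
  have hq1 : n ≤ N * q := by
    have := Nat.div_add_mod n N
    have := Nat.mod_lt n hN
    rw [hq, mul_add]; omega
  have hq2 : N * q ≤ n + N := by
    have := Nat.div_add_mod n N
    rw [hq, mul_add]; omega
  have hq2' : (N * q : ℝ) ≤ n + N := by exact_mod_cast hq2
  obtain ⟨t, ht0, ht, z, hz⟩ := hM q hMq C
  have key : ∀ k, N * q + N * (t k - 1) = N * (q + t k - 1) := by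
    intro k
    rw [← mul_add, Nat.add_sub_assoc (ht0 k)]
  have hseg : ∀ k, segStart (fun _ => n) (fun k => N * q + N * (t k - 1) - n + 1) k
      = N * segStart (fun _ => q) t k := by
    intro k
    unfold segStart
    rw [Finset.mul_sum]
    refine Finset.sum_congr rfl fun i _ => ?_
    have := key i
    have h3 : n ≤ N * q + N * (t i - 1) := hq1.trans (Nat.le_add_right _ _)
    simp only
    rw [← this]
    omega
  refine ⟨fun k => N * q + N * (t k - 1) - n + 1, fun k => Nat.succ_pos _, fun k => ?_, z, ?_⟩
  · have h3 : n ≤ N * q + N * (t k - 1) := hq1.trans (Nat.le_add_right _ _)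
    have h4 := ht k
    have h5 : (N : ℝ) * (t k - 1) ≤ N * (δ₁ / 2 * q) :=
      mul_le_mul_of_nonneg_left (by linarith) hN'.le
    have h6 := mul_le_mul_of_nonneg_left hq2' h1.le
    push_cast [Nat.cast_sub h3, Nat.cast_sub (show 1 ≤ t k from ht0 k)]
    nlinarith
  · intro k
    have hk := hz k
    simp only at hk ⊢
    rw [hseg]
    set B := (Finset.range q).filter (fun j => η <
      dist ((f^[N])^[segStart (fun _ => q) t k + j] z) ((f^[N])^[j] (C k))) with hB
    have hsub : (Finset.range n).filter (fun j => ε <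
        dist (f^[N * segStart (fun _ => q) t k + j] z) (f^[j] (C k))) ⊆
        (B ×ˢ Finset.range N).image (fun p => N * p.1 + p.2) := by
      intro j hj
      rw [Finset.mem_filter, Finset.mem_range] at hj
      obtain ⟨hjn, hj⟩ := hj
      have hjj := Nat.div_add_mod j N
      have hlt := Nat.mod_lt j hN
      refine Finset.mem_image.2 ⟨(j / N, j % N), ?_, hjj⟩
      rw [Finset.mem_product, Finset.mem_range, hB, Finset.mem_filter, Finset.mem_range]
      refine ⟨⟨?_, ?_⟩, hlt⟩
      · have : j / N ≤ n / N := Nat.div_le_div_right hjn.le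
        omega
      · by_contra hcon
        have h7 := hu (j % N) hlt _ _ (not_lt.1 hcon)
        rw [← Function.iterate_mul, ← Function.iterate_mul, ← Function.iterate_add_apply,
          ← Function.iterate_add_apply] at h7
        have e1 : j % N + N * (segStart (fun _ => q) t k + j / N) =
            N * segStart (fun _ => q) t k + j := by
          rw [mul_add]; omega
        have e2 : j % N + N * (j / N) = j := by omega
        rw [e1, e2] at h7
        linarith
    have hc := (Finset.card_le_card hsub).trans Finset.card_image_le
    rw [Finset.card_product, Finset.card_range] at hc
    have hc' : ((((Finset.range n).filter (fun j => ε <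
        dist (f^[N * segStart (fun _ => q) t k + j] z) (f^[j] (C k)))).card : ℕ) : ℝ)
        ≤ B.card * N := by exact_mod_cast hc
    have h8 := mul_le_mul_of_nonneg_right hk hN'.le
    have h9 := mul_le_mul_of_nonneg_left hq2' h2.le
    have h10 := mul_le_mul_of_nonneg_left hnN h2.le
    nlinarith
end Defs
end

section
/- Let I = [a,b] be a compact interval of real numbers and f : I → I a continuous map. Suppose p ∈ I is a fixed point of f (f(p) = p) and f has no other periodic points, i.e. for every x ∈ I and every positive integer n, f^n(x) = x implies x = p. Then p is attracting: for every x ∈ I, f^n(x) → p as n → ∞. -/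
open MeasureTheory Filter Set

section Defs

variable {X : Type*} [MetricSpace X]

theorem aux_left (a b : ℝ) (hab : a ≤ b) (g : Set.Icc a b → Set.Icc a b) (hg : Continuous g)
    (p : Set.Icc a b) (h : ∀ x, g x = x → x = p) (x : Set.Icc a b) (hx : x < p) : x < g x := by
  by_contra hc
  have hc' : (g x : ℝ) ≤ x := not_lt.mp hc
  have hcont : Continuous (fun t : ℝ => (g (Set.projIcc a b hab t) : ℝ) - t) := by fun_prop
  have h0 : (0 : ℝ) ∈ Set.Icc ((fun t : ℝ => (g (Set.projIcc a b hab t) : ℝ) - t) x)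
      ((fun t : ℝ => (g (Set.projIcc a b hab t) : ℝ) - t) a) := by
    constructor
    · simpa [Set.projIcc_val] using hc'
    · simpa using (g (Set.projIcc a b hab a)).2.1
  obtain ⟨t, ht, hgt⟩ := intermediate_value_Icc' x.2.1 hcont.continuousOn h0
  have htm : t ∈ Set.Icc a b := ⟨ht.1, ht.2.trans x.2.2⟩
  simp only [Set.projIcc_of_mem hab htm] at hgt
  have h1 := h ⟨t, htm⟩ (Subtype.ext (by simpa using sub_eq_zero.mp hgt))
  have h2 : (x : ℝ) < p := hx
  rw [← h1] at h2
  exact absurd ht.2 (not_le.mpr h2)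

theorem aux_right (a b : ℝ) (hab : a ≤ b) (g : Set.Icc a b → Set.Icc a b) (hg : Continuous g)
    (p : Set.Icc a b) (h : ∀ x, g x = x → x = p) (x : Set.Icc a b) (hx : p < x) : g x < x := by
  by_contra hc
  have hc' : (x : ℝ) ≤ g x := not_lt.mp hc
  have hcont : Continuous (fun t : ℝ => (g (Set.projIcc a b hab t) : ℝ) - t) := by fun_prop
  have h0 : (0 : ℝ) ∈ Set.Icc ((fun t : ℝ => (g (Set.projIcc a b hab t) : ℝ) - t) b)
      ((fun t : ℝ => (g (Set.projIcc a b hab t) : ℝ) - t) x) := by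
    constructor
    · simpa using (g (Set.projIcc a b hab b)).2.2
    · simpa [Set.projIcc_val] using hc'
  obtain ⟨t, ht, hgt⟩ := intermediate_value_Icc' x.2.2 hcont.continuousOn h0
  have htm : t ∈ Set.Icc a b := ⟨x.2.1.trans ht.1, ht.2⟩
  simp only [Set.projIcc_of_mem hab htm] at hgt
  have h1 := h ⟨t, htm⟩ (Subtype.ext (by simpa using sub_eq_zero.mp hgt))
  have h2 : (p : ℝ) < x := hx
  rw [← h1] at h2
  exact absurd ht.1 (not_le.mpr h2)

theorem interval_unique_periodic_point_attracting
    (a b : ℝ) (hab : a ≤ b) (f : Set.Icc a b → Set.Icc a b) (hf : Continuous f)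
    (p : Set.Icc a b) (hp : f p = p)
    (hper : ∀ (x : Set.Icc a b) (n : ℕ), 0 < n → f^[n] x = x → x = p) :
    ∀ x : Set.Icc a b, Tendsto (fun n => f^[n] x) atTop (nhds p) := by
  intro x
  have hL : ∀ n m : ℕ, n ≤ m → f^[n] x < p → f^[n] x ≤ f^[m] x := by
    intro n m hnm h
    rcases hnm.eq_or_lt with rfl | hlt
    · exact le_rfl
    · have := aux_left a b hab (f^[m - n]) (hf.iterate _) p
        (fun y hy => hper y _ (by omega) hy) _ h
      rw [← Function.iterate_add_apply, Nat.sub_add_cancel hnm] at this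
      exact this.le
  have hR : ∀ n m : ℕ, n ≤ m → p < f^[n] x → f^[m] x ≤ f^[n] x := by
    intro n m hnm h
    rcases hnm.eq_or_lt with rfl | hlt
    · exact le_rfl
    · have := aux_right a b hab (f^[m - n]) (hf.iterate _) p
        (fun y hy => hper y _ (by omega) hy) _ h
      rw [← Function.iterate_add_apply, Nat.sub_add_cancel hnm] at this
      exact this.le
  have hLle : ∀ y z, MapClusterPt y atTop (fun n => f^[n] x) →
      MapClusterPt z atTop (fun n => f^[n] x) → z < p → z ≤ y := by
    intro y z hy hz hzp
    by_contra hc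
    rw [not_le] at hc
    obtain ⟨n, hn1, hn2⟩ := (hz.frequently ((Ioo_mem_nhds hc hzp))).exists
    obtain ⟨m, hm, hm1⟩ := (frequently_atTop.mp (hy.frequently (Iio_mem_nhds hn1))) n
    exact absurd (hL n m hm hn2) (not_le.mpr hm1)
  have hRle : ∀ y z, MapClusterPt y atTop (fun n => f^[n] x) →
      MapClusterPt z atTop (fun n => f^[n] x) → p < z → y ≤ z := by
    intro y z hy hz hzp
    by_contra hc
    rw [not_le] at hc
    obtain ⟨n, hn1, hn2⟩ := (hz.frequently ((Ioo_mem_nhds hzp hc))).exists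
    obtain ⟨m, hm, hm1⟩ := (frequently_atTop.mp (hy.frequently (Ioi_mem_nhds hn2))) n
    exact absurd (hR n m hm hn1) (not_le.mpr hm1)
  have hpre : ∀ y, MapClusterPt y atTop (fun n => f^[n] x) →
      ∃ z, MapClusterPt z atTop (fun n => f^[n] x) ∧ f z = y := by
    intro y hy
    have hy' : MapClusterPt y atTop (fun n => f^[n+1] x) := by
      have : Filter.map (fun n => f^[n+1] x) atTop = Filter.map (fun n => f^[n] x) atTop := by
        conv_rhs => rw [← map_add_atTop_eq_nat 1, Filter.map_map]
        rfl
      unfold MapClusterPt at *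
      rwa [this]
    obtain ⟨U, hU, hUy⟩ := mapClusterPt_iff_ultrafilter.mp hy'
    obtain ⟨z, -, hz⟩ := isCompact_univ.ultrafilter_le_nhds (U.map (fun n => f^[n] x)) (by simp)
    have hz' : Tendsto (fun n => f^[n] x) U (nhds z) := hz
    refine ⟨z, mapClusterPt_iff_ultrafilter.mpr ⟨U, hU, hz'⟩, ?_⟩
    have h2 : Tendsto (fun n => f^[n+1] x) U (nhds (f z)) := by
      simp only [Function.iterate_succ_apply']
      exact (hf.tendsto z).comp hz'
    exact tendsto_nhds_unique h2 hUy
  have key : ∀ y, MapClusterPt y atTop (fun n => f^[n] x) → y = p := by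
    intro y hy
    by_contra hyp
    obtain ⟨z, hz, hzy⟩ := hpre y hy
    obtain ⟨w, hw, hwz⟩ := hpre z hz
    have hzp : z ≠ p := by rintro rfl; exact hyp (hzy.symm.trans hp)
    have hwp : w ≠ p := by rintro rfl; exact hzp (hwz.symm.trans hp)
    have e1 : z ≠ y := by rintro rfl; exact hyp (hper z 1 one_pos hzy)
    have e2 : w ≠ z := by rintro rfl; exact hzp (hper w 1 one_pos hwz)
    have e3 : w ≠ y := by
      rintro rfl
      exact hyp (hper w 2 two_pos (by simp [hwz, hzy]))
    have sL : ∀ u v, MapClusterPt u atTop (fun n => f^[n] x) →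
      MapClusterPt v atTop (fun n => f^[n] x) → u < p → v < p → u = v :=
      fun u v hu hv h1 h2 => le_antisymm (hLle _ _ hv hu h1) (hLle _ _ hu hv h2)
    have sR : ∀ u v, MapClusterPt u atTop (fun n => f^[n] x) →
      MapClusterPt v atTop (fun n => f^[n] x) → p < u → p < v → u = v :=
      fun u v hu hv h1 h2 => le_antisymm (hRle _ _ hu hv h2) (hRle _ _ hv hu h1)
    rcases lt_or_gt_of_ne hyp with h1 | h1 <;> rcases lt_or_gt_of_ne hzp with h2 | h2 <;>
      rcases lt_or_gt_of_ne hwp with h3 | h3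
    · exact e1 (sL _ _ hz hy h2 h1)
    · exact e1 (sL _ _ hz hy h2 h1)
    · exact e3 (sL _ _ hw hy h3 h1)
    · exact e2 (sR _ _ hw hz h3 h2)
    · exact e2 (sL _ _ hw hz h3 h2)
    · exact e3 (sR _ _ hw hy h3 h1)
    · exact e1 (sR _ _ hz hy h2 h1)
    · exact e1 (sR _ _ hz hy h2 h1)
  exact isCompact_univ.le_nhds_of_unique_clusterPt (by simp) (fun y _ hy => key y hy)
end Defs
end

section
/- Let I = [a,b] be a compact interval of real numbers and f : I → I a continuous map. Suppose p ∈ I is a fixed point of f (f(p) = p) and f has no other periodic points, i.e. for every x ∈ I and every positive integer n, f^n(x) = x implies x = p. Then for every x ∈ I: if x < p then f^n(x) > x for every positive integer n, and if x > p then f^n(x) < x for every positive integer n. -/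
open MeasureTheory Filter Set

section Defs

variable {X : Type*} [MetricSpace X]

/-- **Lemma 5.6 (Sun).** If a continuous map of a compact interval has a fixed point
`p` and no other periodic points, then for every `x`: if `x < p` then `f^[n] x > x`
for every `n ≥ 1`, and if `x > p` then `f^[n] x < x` for every `n ≥ 1`. -/
theorem interval_unique_periodic_point_orbit_side
    (a b : ℝ) (hab : a ≤ b) (f : Set.Icc a b → Set.Icc a b) (hf : Continuous f)
    (p : Set.Icc a b) (hp : f p = p)
    (hper : ∀ (x : Set.Icc a b) (n : ℕ), 0 < n → f^[n] x = x → x = p) :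
    ∀ (x : Set.Icc a b) (n : ℕ), 0 < n →
      (x < p → x < f^[n] x) ∧ (p < x → f^[n] x < x) := by
  intro x n hn
  have hg : Continuous f^[n] := hf.iterate n
  have hG : Continuous (fun y : ℝ => ((f^[n] (Set.projIcc a b hab y) : Set.Icc a b) : ℝ) - y) :=
    (continuous_subtype_val.comp (hg.comp continuous_projIcc)).sub continuous_id
  constructor
  · intro hx
    by_contra hlt
    have hle : ((f^[n] x : Set.Icc a b) : ℝ) ≤ x := not_lt.mp hlt
    obtain ⟨y, hy, h0⟩ := intermediate_value_Icc' x.2.1 hG.continuousOn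
      (show (0 : ℝ) ∈ _ from ⟨by simpa using hle,
        sub_nonneg.mpr (f^[n] (Set.projIcc a b hab a)).2.1⟩)
    have hyI : y ∈ Set.Icc a b := ⟨hy.1, hy.2.trans x.2.2⟩
    simp only [Set.projIcc_of_mem hab hyI] at h0
    have hyp := hper ⟨y, hyI⟩ n hn (Subtype.ext (sub_eq_zero.mp h0))
    have h1 : (⟨y, hyI⟩ : Set.Icc a b) ≤ x := hy.2
    exact absurd (hyp ▸ h1) (not_le.mpr hx)
  · intro hx
    by_contra hlt
    have hle : (x : ℝ) ≤ ((f^[n] x : Set.Icc a b) : ℝ) := not_lt.mp hlt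
    obtain ⟨y, hy, h0⟩ := intermediate_value_Icc' x.2.2 hG.continuousOn
      (show (0 : ℝ) ∈ _ from ⟨sub_nonpos.mpr (f^[n] (Set.projIcc a b hab b)).2.2,
        by simpa using hle⟩)
    have hyI : y ∈ Set.Icc a b := ⟨x.2.1.trans hy.1, hy.2⟩
    simp only [Set.projIcc_of_mem hab hyI] at h0
    have hyp := hper ⟨y, hyI⟩ n hn (Subtype.ext (sub_eq_zero.mp h0))
    have h1 : x ≤ (⟨y, hyI⟩ : Set.Icc a b) := hy.1
    exact absurd (hyp ▸ h1) (not_le.mpr hx)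
end Defs
end

section
/- Let I = [a,b] be a compact interval of real numbers with a < b, and let f : I → I be a continuous map. Then (I,f) cannot simultaneously have the strict approximate product property and zero topological entropy. -/
open MeasureTheory Filter Set

section Defs

variable {X : Type*} [MetricSpace X]

theorem traced_zero {Y : Type*} [MetricSpace Y] {f : Y → Y} {C : ℕ → Y} {m t : ℕ → ℕ} {ε : ℝ} {z : Y}
    (h : Traced f C m t 0 ε z) (k j : ℕ) (hj : j < m k) :
    dist (f^[segStart m t k + j] z) (f^[j] (C k)) ≤ ε := by
  have h1 := h k
  by_contra hc
  rw [zero_mul] at h1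
  have h2 : ((Finset.range (m k)).filter
      (fun j => ε < dist (f^[segStart m t k + j] z) (f^[j] (C k)))).card = 0 := by
    exact_mod_cast le_antisymm h1 (Nat.cast_nonneg _)
  rw [Finset.card_eq_zero] at h2
  have h3 : j ∈ ((Finset.range (m k)).filter
      (fun j => ε < dist (f^[segStart m t k + j] z) (f^[j] (C k)))) := by
    simp only [Finset.mem_filter, Finset.mem_range]
    exact ⟨hj, not_le.mp hc⟩
  rw [h2] at h3
  simp at h3

theorem le_sepNum {Y : Type*} [MetricSpace Y] [CompactSpace Y] {f : Y → Y} (hf : Continuous f)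
    (n : ℕ) {ε : ℝ} (hε : 0 < ε) (S : Finset Y)
    (hS : ∀ y ∈ S, ∀ y' ∈ S, y ≠ y' → ∃ j < n, ε < dist (f^[j] y) (f^[j] y')) :
    S.card ≤ sepNum f Set.univ n ε := by
  apply le_csSup
  · have hF : Continuous (fun x : Y => fun j : Fin n => f^[j] x) :=
      continuous_pi fun j => hf.iterate _
    have hU := CompactSpace.uniformContinuous_of_continuous hF
    obtain ⟨η, hη, hU⟩ := Metric.uniformContinuous_iff.mp hU ε hε
    obtain ⟨A, hA, hcov⟩ := Metric.totallyBounded_iff.mp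
      (isCompact_univ (X := Y)).totallyBounded (η / 2) (half_pos hη)
    refine ⟨hA.toFinset.card, ?_⟩
    rintro c ⟨S, -, rfl, hS⟩
    have : ∀ x : Y, ∃ a ∈ A, dist x a < η / 2 := by
      intro x
      have := hcov (Set.mem_univ x)
      simpa using this
    choose g hgA hg using this
    apply Finset.card_le_card_of_injOn g
    · intro x _
      simpa using hgA x
    · intro x hx y hy hxy
      by_contra hne
      obtain ⟨j, hj, hlt⟩ := hS x hx y hy hne
      have h1 : dist x y < η := by
        have := dist_triangle_right x y (g x)
        have h2 := hg x
        have h3 := hg y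
        rw [← hxy] at h3
        linarith
      have h4 := hU h1
      have h5 := dist_le_pi_dist (fun j : Fin n => f^[j] x) (fun j : Fin n => f^[j] y) ⟨j, hj⟩
      simp only at h5
      linarith
  · exact ⟨S, Set.subset_univ _, rfl, hS⟩

theorem segStart_eq (n : ℕ) (t : ℕ → ℕ) (ht : ∀ k, 0 < t k) (k : ℕ) :
    segStart (fun _ => n) t k = n * k + ∑ i ∈ Finset.range k, (t i - 1) := by
  unfold segStart
  induction k with
  | zero => simp
  | succ k ih =>
    rw [Finset.sum_range_succ, ih, Finset.sum_range_succ, Nat.mul_succ]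
    have := ht k
    show _ + (n + t k - 1) = _
    omega

/-- a point which returns near `q` syndetically -/
theorem exists_syndetic {Y : Type*} [MetricSpace Y] {f : Y → Y} (hs : StrictApproxProduct f)
    (q : Y) {ε : ℝ} (hε : 0 < ε) :
    ∃ (y : Y) (L : ℕ), ∀ u : ℕ, ∃ j, u ≤ j ∧ j < u + L ∧ dist (f^[j] y) q ≤ ε := by
  obtain ⟨M, hM⟩ := hs 1 ε one_pos hε
  obtain ⟨t, ht, ht', y, hy⟩ := hM (M + 1) (Nat.lt_succ_self _) (fun _ => q)
  have hb : ∀ k, t k ≤ M + 2 := by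
    intro k
    have := ht' k
    have h2 : (t k : ℝ) ≤ ((M + 2 : ℕ) : ℝ) := by push_cast at this ⊢; linarith
    exact_mod_cast h2
  have hd : ∀ k, dist (f^[segStart (fun _ => M + 1) t k] y) q ≤ ε := by
    intro k
    simpa using traced_zero hy k 0 (Nat.succ_pos _)
  refine ⟨y, 2 * M + 3, fun u => ?_⟩
  induction u with
  | zero => exact ⟨0, le_rfl, by omega, by simpa [segStart] using hd 0⟩
  | succ u _ =>
    have hex : ∃ k, u + 1 ≤ segStart (fun _ => M + 1) t k := by
      refine ⟨u + 1, ?_⟩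
      rw [segStart_eq _ _ ht]
      nlinarith [Nat.zero_le (∑ i ∈ Finset.range (u + 1), (t i - 1))]
    classical
    have hk := Nat.find_spec hex
    have hmin : ∀ m, m < Nat.find hex → _ := fun m hm => Nat.find_min hex hm
    generalize Nat.find hex = k at hk hmin
    refine ⟨_, hk, ?_, hd k⟩
    cases k with
    | zero => simp [segStart] at hk
    | succ k =>
      have h1 := hmin k (Nat.lt_succ_self _)
      have h2 : segStart (fun _ => M + 1) t (k + 1) =
        segStart (fun _ => M + 1) t k + (M + 1 + t k - 1) := by
        simp [segStart, Finset.sum_range_succ]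
      have := hb k
      omega

theorem sep_lower {Y : Type*} [MetricSpace Y] [CompactSpace Y] {f : Y → Y} (hf : Continuous f)
    (hs : StrictApproxProduct f) (p q : Y) (hp : f p = p) {ε : ℝ} (hε : 0 < ε)
    (hpq : 5 * ε ≤ dist p q) :
    ∃ w : ℕ, 0 < w ∧ ∀ N : ℕ, 2 ^ N ≤ sepNum f Set.univ (40 * w * N) ε := by
  classical
  obtain ⟨y, L, hy⟩ := exists_syndetic hs q hε
  obtain ⟨M, hM⟩ := hs (1 / 20) ε (by norm_num) hε
  obtain ⟨w, hw⟩ : ∃ w, w = M + L + 1 := ⟨_, rfl⟩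
  have hw0 : 0 < w := by omega
  refine ⟨w, hw0, fun N => ?_⟩
  choose t ht ht' z hz using fun ω : Finset ℕ => hM (10 * w) (by omega)
    (fun k => if k ∈ ω then y else p)
  have hb : ∀ ω k, 2 * (t ω k - 1) ≤ w := by
    intro ω k
    have h1 := ht' ω k
    have h2 : ((2 * t ω k : ℕ) : ℝ) ≤ ((w + 2 : ℕ) : ℝ) := by push_cast at h1 ⊢; linarith
    have h3 : 2 * t ω k ≤ w + 2 := by exact_mod_cast h2
    omega
  obtain ⟨S, hS⟩ : ∃ S : Finset ℕ → ℕ → ℕ,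
    S = fun ω k => ∑ i ∈ Finset.range k, (t ω i - 1) := ⟨_, rfl⟩
  have hS0 : ∀ ω, S ω 0 = 0 := by simp [hS]
  have hSs : ∀ ω k, S ω (k + 1) = S ω k + (t ω k - 1) := by
    intro ω k; simp [hS, Finset.sum_range_succ]
  have hseg : ∀ ω k, segStart (fun _ => 10 * w) (t ω) k = 10 * w * k + S ω k := by
    intro ω k; rw [segStart_eq _ _ (ht ω), hS]
  have hSle : ∀ ω k, S ω k ≤ w * k := by
    intro ω k
    induction k with
    | zero => simp [hS0]
    | succ k ih =>
      have := hb ω k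
      rw [hSs, Nat.mul_succ]; omega
  have hpn : ∀ j, f^[j] p = p := fun j => Function.iterate_fixed hp j
  -- main separation
  have key : ∀ ω ω' k, k < 2 * N → k ∈ ω → k ∉ ω' → S ω k < S ω' k + 2 * w →
      S ω' k < S ω k + 2 * w →
      ∃ j < 40 * w * N, ε < dist (f^[j] (z ω)) (f^[j] (z ω')) := by
    intro ω ω' k hk h1 h2 h3 h4
    obtain ⟨j, hj1, hj2, hj⟩ := hy (2 * w)
    have a1 := traced_zero (hz ω) k j (by show j < 10 * w; omega)
    have a2 := traced_zero (hz ω') k (S ω k + j - S ω' k) (by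
      show S ω k + j - S ω' k < 10 * w; omega)
    rw [hseg] at a1 a2
    simp only [h1, h2, if_true, if_false, hpn] at a1 a2
    have e : 10 * w * k + S ω' k + (S ω k + j - S ω' k) = 10 * w * k + S ω k + j := by omega
    rw [e] at a2
    refine ⟨10 * w * k + S ω k + j, ?_, ?_⟩
    · have := hSle ω k
      have h5 : w * (k + 1) ≤ w * (2 * N) := Nat.mul_le_mul_left _ hk
      have e1 : 10 * w * k = 10 * (w * k) := by ring
      have e2 : 40 * w * N = 20 * (w * (2 * N)) := by ring
      rw [Nat.mul_succ] at h5
      rw [e1, e2]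
      omega
    · have b1 := dist_triangle4 p (f^[10 * w * k + S ω k + j] (z ω'))
        (f^[10 * w * k + S ω k + j] (z ω)) q
      have b2 := dist_triangle (f^[10 * w * k + S ω k + j] (z ω)) (f^[j] y) q
      rw [dist_comm p (f^[10 * w * k + S ω k + j] (z ω')),
        dist_comm (f^[10 * w * k + S ω k + j] (z ω')) (f^[10 * w * k + S ω k + j] (z ω))] at b1
      linarith
  -- coding
  obtain ⟨c, hc⟩ : ∃ c : Finset ℕ → Finset ℕ, c = fun ω =>
    (Finset.range N).filter (fun i => S ω (2 * (i + 1)) / w ≠ S ω (2 * i) / w) := ⟨_, rfl⟩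
  have hstep : ∀ ω i, S ω (2 * (i + 1)) / w = S ω (2 * i) / w ∨
      S ω (2 * (i + 1)) / w = S ω (2 * i) / w + 1 := by
    intro ω i
    have e : S ω (2 * (i + 1)) = S ω (2 * i) + (t ω (2 * i) - 1) + (t ω (2 * i + 1) - 1) := by
      rw [show 2 * (i + 1) = 2 * i + 1 + 1 by ring, hSs, hSs]
    have b1 := hb ω (2 * i)
    have b2 := hb ω (2 * i + 1)
    have l1 : S ω (2 * i) / w ≤ S ω (2 * (i + 1)) / w := Nat.div_le_div_right (by omega)
    have l2 : S ω (2 * (i + 1)) / w ≤ (S ω (2 * i) + w) / w := Nat.div_le_div_right (by omega)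
    rw [Nat.add_div_right _ hw0] at l2
    omega
  have hcode : ∀ ω ω', c ω = c ω' → ∀ i ≤ N, S ω (2 * i) / w = S ω' (2 * i) / w := by
    intro ω ω' h i
    induction i with
    | zero => simp [hS0]
    | succ i ih =>
      intro hi
      have ih := ih (by omega)
      have hmem : i ∈ c ω ↔ i ∈ c ω' := by rw [h]
      have hiN : i < N := by omega
      simp only [hc, Finset.mem_filter, Finset.mem_range, hiN, true_and] at hmem
      have := hstep ω i
      have := hstep ω' i
      omega
  have hclose : ∀ ω ω', c ω = c ω' → ∀ k < 2 * N, S ω k < S ω' k + 2 * w := by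
    intro ω ω' h k hk
    have h1 := hcode ω ω' h (k / 2) (by omega)
    have d1 := Nat.div_add_mod (S ω (2 * (k / 2))) w
    have d2 := Nat.div_add_mod (S ω' (2 * (k / 2))) w
    have m1 := Nat.mod_lt (S ω (2 * (k / 2))) hw0
    have m2 := Nat.mod_lt (S ω' (2 * (k / 2))) hw0
    rw [h1] at d1
    have b1 := hb ω (2 * (k / 2))
    have b2 := hb ω' (2 * (k / 2))
    have s1 := hSs ω (2 * (k / 2))
    have s2 := hSs ω' (2 * (k / 2))
    rcases Nat.even_or_odd k with he | ho
    · have : k = 2 * (k / 2) := by have := Nat.even_iff.mp he; omega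
      rw [this]; omega
    · have : k = 2 * (k / 2) + 1 := by have := Nat.odd_iff.mp ho; omega
      rw [this]; omega
  -- pigeonhole
  obtain ⟨d, -, hd⟩ := Finset.exists_le_card_fiber_of_mul_le_card_of_maps_to
    (s := (Finset.range (2 * N)).powerset) (t := (Finset.range N).powerset) (f := c) (n := 2 ^ N)
    (by intro ω _; rw [hc]; simp) ⟨∅, by simp⟩ (by simp [two_mul, pow_add])
  have hsep : ∀ ω ∈ (Finset.range (2 * N)).powerset.filter (fun ω => c ω = d),
      ∀ ω' ∈ (Finset.range (2 * N)).powerset.filter (fun ω => c ω = d), ω ≠ ω' →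
      ∃ j < 40 * w * N, ε < dist (f^[j] (z ω)) (f^[j] (z ω')) := by
    intro ω hω ω' hω' hne
    simp only [Finset.mem_filter, Finset.mem_powerset] at hω hω'
    have hcc : c ω = c ω' := hω.2.trans hω'.2.symm
    obtain ⟨k, hk⟩ : ∃ k, ¬ (k ∈ ω ↔ k ∈ ω') := by
      by_contra hcon
      push Not at hcon
      exact hne (Finset.ext hcon)
    by_cases h1 : k ∈ ω
    · have h2 : k ∉ ω' := by tauto
      have hk2 := Finset.mem_range.mp (hω.1 h1)
      exact key ω ω' k hk2 h1 h2 (hclose _ _ hcc k hk2) (hclose _ _ hcc.symm k hk2)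
    · have h2 : k ∈ ω' := by tauto
      have hk2 := Finset.mem_range.mp (hω'.1 h2)
      obtain ⟨j, hj, hlt⟩ :=
        key ω' ω k hk2 h2 h1 (hclose _ _ hcc.symm k hk2) (hclose _ _ hcc k hk2)
      exact ⟨j, hj, by rwa [dist_comm]⟩
  have hinj : Set.InjOn z
      ((Finset.range (2 * N)).powerset.filter (fun ω => c ω = d) : Finset (Finset ℕ)) := by
    intro ω hω ω' hω' he
    by_contra hne
    obtain ⟨j, -, hlt⟩ := hsep ω hω ω' hω' hne
    rw [he, dist_self] at hlt
    linarith
  refine hd.trans ?_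
  rw [← Finset.card_image_of_injOn hinj]
  apply le_sepNum hf _ hε
  intro x hx x' hx' hne
  obtain ⟨ω, hω, rfl⟩ := Finset.mem_image.mp hx
  obtain ⟨ω', hω', rfl⟩ := Finset.mem_image.mp hx'
  exact hsep ω hω ω' hω' (fun h => hne (by rw [h]))

theorem topEnt_pos {Y : Type*} [MetricSpace Y] [CompactSpace Y] {f : Y → Y} (hf : Continuous f)
    (hs : StrictApproxProduct f) (p q : Y) (hp : f p = p) (hne : p ≠ q) : 0 < topEnt f := by
  have hd := dist_pos.mpr hne
  obtain ⟨w, hw, hN⟩ := sep_lower hf hs p q hp (ε := dist p q / 5) (by linarith) (by linarith)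
  have hwr : (0 : ℝ) < w := by exact_mod_cast hw
  have hc : (0 : EReal) < ((Real.log 2 / (40 * w) : ℝ) : EReal) := by
    have : 0 < Real.log 2 / (40 * w) := div_pos (Real.log_pos (by norm_num)) (by linarith)
    exact_mod_cast this
  refine hc.trans_le (le_trans ?_ (le_iSup₂_of_le (dist p q / 5) (by linarith) le_rfl))
  unfold entScale
  apply le_limsup_of_frequently_le'
  rw [Filter.frequently_atTop]
  intro m
  refine ⟨40 * w * (m + 1), by nlinarith, ?_⟩
  rw [EReal.coe_le_coe_iff]
  have h1 : ((2 : ℝ) ^ (m + 1)) ≤ (sepNum f Set.univ (40 * w * (m + 1)) (dist p q / 5) : ℝ) := by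
    exact_mod_cast hN (m + 1)
  have h2 := Real.log_le_log (by positivity) h1
  rw [Real.log_pow] at h2
  have hm : (0 : ℝ) < ((m + 1 : ℕ) : ℝ) := by positivity
  rw [div_le_div_iff₀ (by positivity) (by positivity)]
  push_cast at h2 ⊢
  nlinarith

theorem exists_fixed (a b : ℝ) (hab : a < b) (f : Set.Icc a b → Set.Icc a b) (hf : Continuous f) :
    ∃ p, f p = p := by
  have : Fact (a ≤ b) := ⟨hab.le⟩
  have : PreconnectedSpace (Set.Icc a b) := Subtype.preconnectedSpace isPreconnected_Icc
  obtain ⟨p, hp⟩ := mem_range_of_exists_le_of_exists_ge (c := (0 : ℝ))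
    (f := fun x : Set.Icc a b => (f x : ℝ) - x) (by fun_prop)
    ⟨⟨b, hab.le, le_rfl⟩, by have := (f ⟨b, hab.le, le_rfl⟩).2.2; simp only; linarith⟩
    ⟨⟨a, le_rfl, hab.le⟩, by have := (f ⟨a, le_rfl, hab.le⟩).2.1; simp only; linarith⟩
  exact ⟨p, Subtype.ext (by simp only at hp; linarith)⟩

/-- No continuous map of a nondegenerate compact interval has both the strict
approximate product property and zero topological entropy. -/
theorem interval_no_sapp_with_zero_entropy
    (a b : ℝ) (hab : a < b) (f : Set.Icc a b → Set.Icc a b) (hf : Continuous f) :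
    ¬(StrictApproxProduct f ∧ topEnt f = 0) := by
  rintro ⟨hs, h0⟩
  obtain ⟨p, hp⟩ := exists_fixed a b hab f hf
  have : Nontrivial (Set.Icc a b) :=
    ⟨⟨a, le_rfl, hab.le⟩, ⟨b, hab.le, le_rfl⟩, fun h => hab.ne (congrArg Subtype.val h)⟩
  obtain ⟨q, hq⟩ := exists_ne p
  exact (topEnt_pos hf hs p q hp hq.symm).ne' h0
end Defs
end

section
/- Let I = [a,b] be a compact interval of real numbers with a < b, and let f : I → I be a continuous map that is topologically transitive and has the approximate product property. Then the topological entropy of (I,f) is strictly positive. -/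
open MeasureTheory Filter Set

section Defs

variable {X : Type*} [MetricSpace X]

section Horseshoe

variable {Y : Type*} [TopologicalSpace Y] [LinearOrder Y] [OrderTopology Y] [DenselyOrdered Y]

theorem hs_sign {f : Y → Y} (hf : Continuous f) {W : Set Y} (hW : IsPreconnected W)
    (hper : ∀ k, 0 < k → ∀ w ∈ W, f^[k] w ≠ w) {k : ℕ} (hk : 0 < k) {x y : Y}
    (hx : x ∈ W) (hy : y ∈ W) (hxk : x < f^[k] x) : y < f^[k] y := by
  by_contra h
  push Not at h
  obtain ⟨z, hz, hzz⟩ := hW.intermediate_value₂ hx hy continuous_id.continuousOn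
    (hf.iterate k).continuousOn hxk.le h
  exact hper k hk z hz hzz.symm

theorem hs_periodic (hI : ∀ x y : Y, IsPreconnected (Set.Icc x y)) {f : Y → Y}
    (hf : Continuous f)
    (htrans : ∀ U V : Set Y, IsOpen U → IsOpen V →
      U.Nonempty → V.Nonempty → ∃ n : ℕ, ((f^[n]) ⁻¹' U ∩ V).Nonempty)
    {u v : Y} (huv : u < v) : ∃ x ∈ Set.Ioo u v, ∃ k, 0 < k ∧ f^[k] x = x := by
  by_contra hcon
  have hper : ∀ k, 0 < k → ∀ w ∈ Set.Ioo u v, f^[k] w ≠ w := by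
    intro k hk w hw h
    exact hcon ⟨w, hw, k, hk, h⟩
  obtain ⟨w, huw, hwv⟩ := exists_between huv
  obtain ⟨n, x, hx1, hx2⟩ := htrans (Set.Ioo w v) (Set.Ioo u w) isOpen_Ioo isOpen_Ioo
    (nonempty_Ioo.2 hwv) (nonempty_Ioo.2 huw)
  obtain ⟨m, y, hy1, hy2⟩ := htrans (Set.Ioo u w) (Set.Ioo w v) isOpen_Ioo isOpen_Ioo
    (nonempty_Ioo.2 huw) (nonempty_Ioo.2 hwv)
  simp only [Set.mem_preimage, Set.mem_Ioo] at hx1 hx2 hy1 hy2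
  have hW : IsPreconnected (Set.Ioo u v) := by
    apply isPreconnected_of_forall_pair
    intro s hs t ht
    rcases le_total s t with hst | hst
    · exact ⟨Set.Icc s t, fun z hz => ⟨hs.1.trans_le hz.1, hz.2.trans_lt ht.2⟩,
        ⟨le_rfl, hst⟩, ⟨hst, le_rfl⟩, hI s t⟩
    · exact ⟨Set.Icc t s, fun z hz => ⟨ht.1.trans_le hz.1, hz.2.trans_lt hs.2⟩,
        ⟨hst, le_rfl⟩, ⟨le_rfl, hst⟩, hI t s⟩
  have hn : 0 < n := by
    rcases Nat.eq_zero_or_pos n with rfl | h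
    · exact absurd (hx1.1.trans hx2.2) (lt_irrefl _)
    · exact h
  have hm : 0 < m := by
    rcases Nat.eq_zero_or_pos m with rfl | h
    · exact absurd (hy2.1.trans hy1.2) (lt_irrefl _)
    · exact h
  have hxW : x ∈ Set.Ioo u v := ⟨hx2.1, hx2.2.trans hwv⟩
  have hyW : y ∈ Set.Ioo u v := ⟨huw.trans hy2.1, hy2.2⟩
  have hfxW : f^[n] x ∈ Set.Ioo u v := ⟨huw.trans hx1.1, hx1.2⟩
  have hfyW : f^[m] y ∈ Set.Ioo u v := ⟨hy1.1, hy1.2.trans hwv⟩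
  have hxlt : x < f^[n] x := hx2.2.trans hx1.1
  have hylt : f^[m] y < y := hy1.2.trans hy2.1
  have h1 : ∀ j, x < f^[n * (j+1)] x := by
    intro j
    induction j with
    | zero => simpa using hxlt
    | succ j ih =>
      have := hs_sign hf hW hper (by positivity) hxW hfxW ih
      rw [← Function.iterate_add_apply] at this
      have e : n * (j + 1 + 1) = n * (j+1) + n := by ring
      rw [e]
      exact hxlt.trans this
  have h2 : ∀ j, f^[m * (j+1)] y < y := by
    intro j
    induction j with
    | zero => simpa using hylt
    | succ j ih =>
      have : f^[m * (j+1)] (f^[m] y) < f^[m] y := by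
        by_contra hc
        push Not at hc
        have hc' := lt_of_le_of_ne hc (hper _ (by positivity) _ hfyW).symm
        exact absurd (hs_sign hf hW hper (by positivity) hfyW hyW hc') (not_lt.2 ih.le)
      rw [← Function.iterate_add_apply] at this
      have e : m * (j + 1 + 1) = m * (j+1) + m := by ring
      rw [e]
      exact this.trans hylt
  have h3 := h1 (m-1)
  have h4 := h2 (n-1)
  rw [Nat.sub_add_cancel hm] at h3
  rw [Nat.sub_add_cancel hn, mul_comm] at h4
  exact absurd (hs_sign hf hW hper (by positivity) hxW hyW h3) (not_lt.2 h4.le)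

/-- Union of iterates along a residue class. -/
def hsD (f : Y → Y) (k : ℕ) (A : Set Y) (i : ℕ) : Set Y := ⋃ j : ℕ, f^[i + k * j] '' A

theorem hs_self (hI : ∀ x y : Y, IsPreconnected (Set.Icc x y)) {f : Y → Y}
    (hf : Continuous f) {x y : Y} {k : ℕ} (hxy : x ≤ y) (hx : f^[k] x = x) (hy : f^[k] y = y) :
    Set.Icc x y ⊆ f^[k] '' Set.Icc x y :=
  ((hI x y).image _ (hf.iterate k).continuousOn).Icc_subset ⟨x, ⟨le_rfl, hxy⟩, hx⟩
    ⟨y, ⟨hxy, le_rfl⟩, hy⟩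

theorem hs_comp {Z : Type*} {f : Z → Z} {A B C : Set Z} {m n : ℕ} (h1 : B ⊆ f^[m] '' A)
    (h2 : C ⊆ f^[n] '' B) : C ⊆ f^[m + n] '' A := by
  intro z hz
  obtain ⟨w, hw, rfl⟩ := h2 hz
  obtain ⟨v, hv, rfl⟩ := h1 hw
  exact ⟨v, hv, by rw [add_comm, Function.iterate_add_apply]⟩

theorem hs_pow {Z : Type*} {f : Z → Z} {A : Set Z} {k : ℕ} (h : A ⊆ f^[k] '' A) (j : ℕ) :
    A ⊆ f^[k * j] '' A := by
  induction j with
  | zero => simp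
  | succ j ih => exact hs_comp ih h

theorem hs_mono {Z : Type*} {f : Z → Z} {A : Set Z} {k : ℕ} (h : A ⊆ f^[k] '' A) (i : ℕ) {j l : ℕ}
    (hjl : j ≤ l) : f^[i + k * j] '' A ⊆ f^[i + k * l] '' A := by
  obtain ⟨d, rfl⟩ := Nat.exists_eq_add_of_le hjl
  have := hs_comp (hs_pow h d) (subset_refl (f^[i + k * j] '' A))
  convert this using 3
  ring

theorem hs_cover (hI : ∀ x y : Y, IsPreconnected (Set.Icc x y)) {f : Y → Y}
    (hf : Continuous f) {x y : Y} {k i : ℕ}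
    (h : Set.Icc x y ⊆ f^[k] '' Set.Icc x y) {u v : Y}
    (hu : u ∈ hsD f k (Set.Icc x y) i) (hv : v ∈ hsD f k (Set.Icc x y) i) :
    ∃ j, Set.Icc u v ⊆ f^[i + k * j] '' Set.Icc x y := by
  obtain ⟨j1, h1⟩ := Set.mem_iUnion.1 hu
  obtain ⟨j2, h2⟩ := Set.mem_iUnion.1 hv
  exact ⟨max j1 j2, ((hI x y).image _ (hf.iterate _).continuousOn).Icc_subset
    (hs_mono h i (le_max_left _ _) h1) (hs_mono h i (le_max_right _ _) h2)⟩

theorem hs_dense {f : Y → Y} (htrans : ∀ U V : Set Y, IsOpen U → IsOpen V →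
      U.Nonempty → V.Nonempty → ∃ n : ℕ, ((f^[n]) ⁻¹' U ∩ V).Nonempty)
    {x y : Y} (hxy : x < y) {k : ℕ} (hk : 0 < k) :
    Dense (⋃ i ∈ Finset.range k, hsD f k (Set.Icc x y) i) := by
  rw [dense_iff_inter_open]
  intro U hU hne
  obtain ⟨n, z, hz1, hz2⟩ := htrans U (Set.Ioo x y) hU isOpen_Ioo hne (nonempty_Ioo.2 hxy)
  refine ⟨f^[n] z, hz1, ?_⟩
  simp only [Set.mem_iUnion, hsD]
  refine ⟨n % k, Finset.mem_range.2 (Nat.mod_lt _ hk), n / k, z, ⟨hz2.1.le, hz2.2.le⟩, ?_⟩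
  rw [Nat.mod_add_div]

theorem hs_closure {f : Y → Y} (hf : Continuous f)
    (htrans : ∀ U V : Set Y, IsOpen U → IsOpen V →
      U.Nonempty → V.Nonempty → ∃ n : ℕ, ((f^[n]) ⁻¹' U ∩ V).Nonempty)
    {x y : Y} (hxy : x < y) {k : ℕ} (hk : 0 < k) {p : Y} (hp : f p = p) (i : ℕ) :
    p ∈ closure (hsD f k (Set.Icc x y) i) := by
  have h := hs_dense htrans hxy hk p
  rw [Finset.closure_biUnion] at h
  simp only [Set.mem_iUnion] at h
  obtain ⟨i0, -, h0⟩ := h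
  obtain ⟨m, hm⟩ : ∃ m, i0 + m = i + k * i0 :=
    ⟨i + k * i0 - i0, by have := Nat.le_mul_of_pos_left i0 hk; omega⟩
  have hpm : f^[m] p = p := Function.iterate_fixed hp m
  rw [← hpm]
  refine map_mem_closure (hf.iterate m) h0 ?_
  intro z hz
  obtain ⟨j, w, hw, rfl⟩ := Set.mem_iUnion.1 hz
  refine Set.mem_iUnion.2 ⟨i0 + j, w, hw, ?_⟩
  rw [← Function.iterate_add_apply]
  have e : i + k * (i0 + j) = m + (i0 + k * j) := by
    rw [mul_add]
    omega
  rw [e]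

theorem hs_right (hI : ∀ x y : Y, IsPreconnected (Set.Icc x y)) {f : Y → Y}
    (hf : Continuous f)
    (htrans : ∀ U V : Set Y, IsOpen U → IsOpen V →
      U.Nonempty → V.Nonempty → ∃ n : ℕ, ((f^[n]) ⁻¹' U ∩ V).Nonempty)
    {p e : Y} (hp : f p = p) (hpe : p < e) :
    ∃ A B : Set Y, IsClosed A ∧ IsClosed B ∧ A.Nonempty ∧ B.Nonempty ∧ Disjoint A B ∧ ∃ N, 0 < N ∧
      A ∪ B ⊆ f^[N] '' A ∧ A ∪ B ⊆ f^[N] '' B := by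
  obtain ⟨x, ⟨hpx, hxe⟩, k1, hk1, hx⟩ := hs_periodic hI hf htrans hpe
  obtain ⟨y, ⟨hxy, hye⟩, k2, hk2, hy⟩ := hs_periodic hI hf htrans hxe
  obtain ⟨c, ⟨hyc, hce⟩, k3, hk3, hc⟩ := hs_periodic hI hf htrans hye
  obtain ⟨d, ⟨hcd, hde⟩, k4, hk4, hd⟩ := hs_periodic hI hf htrans hce
  obtain ⟨k, hk, hxk, hyk, hck, hdk⟩ : ∃ k, 0 < k ∧ f^[k] x = x ∧ f^[k] y = y ∧ f^[k] c = c ∧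
      f^[k] d = d := by
    have key : ∀ {z : Y} {m : ℕ} (l : ℕ), f^[m] z = z → f^[m * l] z = z := by
      intro z m l h
      rw [Function.iterate_mul]
      exact Function.iterate_fixed h l
    refine ⟨k1 * k2 * k3 * k4, by positivity, ?_, ?_, ?_, ?_⟩
    · rw [show k1 * k2 * k3 * k4 = k1 * (k2 * k3 * k4) by ring]; exact key _ hx
    · rw [show k1 * k2 * k3 * k4 = k2 * (k1 * k3 * k4) by ring]; exact key _ hy
    · rw [show k1 * k2 * k3 * k4 = k3 * (k1 * k2 * k4) by ring]; exact key _ hc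
    · rw [show k1 * k2 * k3 * k4 = k4 * (k1 * k2 * k3) by ring]; exact key _ hd
  have hA := hs_self hI hf hxy.le hxk hyk
  have hB := hs_self hI hf hcd.le hck hdk
  have hdown : ∀ {s t : Y} (i : ℕ), s < t → Set.Icc s t ⊆ f^[k] '' Set.Icc s t →
      ∀ {u w : Y}, w ∈ hsD f k (Set.Icc s t) i → p < u → u ≤ w →
        u ∈ hsD f k (Set.Icc s t) i := by
    intro s t i hst hself u w hw hpu huw
    have hcl := hs_closure hf htrans hst hk hp i
    obtain ⟨q, hq1, hq2⟩ := mem_closure_iff.1 hcl (Set.Iio u) isOpen_Iio hpu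
    obtain ⟨j, hj⟩ := hs_cover hI hf hself hq2 hw
    exact Set.mem_iUnion.2 ⟨j, hj ⟨le_of_lt hq1, huw⟩⟩
  -- B covers A ∪ B
  have hd0 : d ∈ hsD f k (Set.Icc c d) 0 := Set.mem_iUnion.2 ⟨0, d, ⟨hcd.le, le_rfl⟩, by simp⟩
  have hx0 := hdown 0 hcd hB hd0 hpx (hxy.trans (hyc.trans hcd)).le
  obtain ⟨j, hj⟩ := hs_cover hI hf hB hx0 hd0
  rw [zero_add] at hj
  have hAsub : Set.Icc x y ⊆ Set.Icc x d := Set.Icc_subset_Icc le_rfl (hyc.trans hcd).le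
  have hBsub : Set.Icc c d ⊆ Set.Icc x d := Set.Icc_subset_Icc (hxy.trans hyc).le le_rfl
  have hj0 : 0 < j := by
    rcases Nat.eq_zero_or_pos j with rfl | h
    · have := hj ⟨le_rfl, (hxy.trans (hyc.trans hcd)).le⟩
      simp only [mul_zero, Function.iterate_zero, Set.image_id] at this
      exact absurd this.1 (not_le.2 (hxy.trans hyc))
    · exact h
  -- A covers B
  obtain ⟨T, hT⟩ : ∃ T, Set.Icc c d ⊆ f^[T] '' Set.Icc x y := by
    obtain ⟨w, hw1, hw2⟩ := dense_iff_inter_open.1 (hs_dense htrans hxy hk) (Set.Ioo d e) isOpen_Ioo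
      (nonempty_Ioo.2 hde)
    simp only [Set.mem_iUnion] at hw2
    obtain ⟨i, -, hw⟩ := hw2
    have hc1 := hdown i hxy hA hw (hpx.trans (hxy.trans hyc)) (hcd.trans hw1.1).le
    have hd1 := hdown i hxy hA hw (hpx.trans (hxy.trans (hyc.trans hcd))) hw1.1.le
    obtain ⟨l, hl⟩ := hs_cover hI hf hA hc1 hd1
    exact ⟨_, hl⟩
  have hP : ∀ l, Set.Icc c d ⊆ f^[T + (k * j + T) * l] '' Set.Icc x y := by
    intro l
    induction l with
    | zero => simpa using hT
    | succ l ih =>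
      have := hs_comp (hs_comp ih (hAsub.trans hj)) hT
      convert this using 3
      ring
  obtain ⟨k', rfl⟩ : ∃ k', k = k' + 1 := ⟨k - 1, by omega⟩
  have hU : Set.Icc x y ∪ Set.Icc c d ⊆ f^[(k'+1) * (T + j * k')] '' Set.Icc x y := by
    refine Set.union_subset (hs_pow hA _) ?_
    have := hP k'
    convert this using 3
    ring
  have hV : Set.Icc x y ∪ Set.Icc c d ⊆ f^[(k'+1) * j] '' Set.Icc c d :=
    (Set.union_subset hAsub hBsub).trans hj
  have hdisj : Disjoint (Set.Icc x y) (Set.Icc c d) := by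
    rw [Set.disjoint_left]
    intro z hz hz'
    exact absurd (hz.2.trans_lt hyc) (not_lt.2 hz'.1)
  generalize (k'+1) * (T + j * k') = U at hU
  have hU0 : 0 < U := by
    rcases Nat.eq_zero_or_pos U with rfl | h
    · have := hU (Or.inr ⟨le_rfl, hcd.le⟩)
      simp only [Function.iterate_zero, Set.image_id] at this
      exact absurd this.2 (not_le.2 hyc)
    · exact h
  have hS0 : 0 < (k'+1) * j := by positivity
  generalize (k'+1) * j = S at hV hS0
  refine ⟨_, _, isClosed_Icc, isClosed_Icc, ⟨x, le_rfl, hxy.le⟩, ⟨c, le_rfl, hcd.le⟩, hdisj,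
    U * S, by positivity, ?_, ?_⟩
  · obtain ⟨s, rfl⟩ : ∃ s, S = s + 1 := ⟨S - 1, by omega⟩
    have := hs_comp (hs_pow (Set.subset_union_left.trans hU) s) hU
    exact this
  · obtain ⟨s, rfl⟩ : ∃ s, U = s + 1 := ⟨U - 1, by omega⟩
    have := hs_comp (hs_pow (Set.subset_union_right.trans hV) s) hV
    rwa [mul_comm]

end Horseshoe

theorem hs_word {Z : Type*} {f : Z → Z} {H : Bool → Set Z} {N : ℕ} (hne : ∀ b, (H b).Nonempty)
    (h : ∀ b b', H b' ⊆ f^[N] '' H b) (n : ℕ) :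
    ∀ w : ℕ → Bool, ∃ x, ∀ i ≤ n, f^[N * i] x ∈ H (w i) := by
  induction n with
  | zero =>
    intro w
    obtain ⟨x, hx⟩ := hne (w 0)
    refine ⟨x, fun i hi => ?_⟩
    obtain rfl : i = 0 := by omega
    simpa using hx
  | succ n ih =>
    intro w
    obtain ⟨y, hy⟩ := ih (fun i => w (i+1))
    have h0 := hy 0 (Nat.zero_le _)
    obtain ⟨x, hx, hxy⟩ := h (w 0) _ h0
    refine ⟨x, fun i hi => ?_⟩
    rcases i with _ | i
    · simpa using hx
    · have := hy i (by omega)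
      have e : f^[N * (i+1)] x = f^[N * i] y := by
        rw [mul_add, mul_one, Function.iterate_add_apply, hxy]; simp
      rw [e]; exact this

theorem hs_bdd {Z : Type*} [MetricSpace Z] [CompactSpace Z] (f : Z → Z) (n : ℕ) {ε : ℝ}
    (hε : 0 < ε) :
    BddAbove {c : ℕ | ∃ S : Finset Z, ↑S ⊆ (Set.univ : Set Z) ∧ S.card = c ∧
    ∀ y ∈ S, ∀ y' ∈ S, y ≠ y' → ∃ j < n, ε < dist (f^[j] y) (f^[j] y')} := by
  obtain ⟨t, -, htf, ht⟩ := (isCompact_univ (X := Fin n → Z)).finite_cover_balls (half_pos hε)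
  refine ⟨htf.toFinset.card, ?_⟩
  rintro c ⟨S, -, rfl, hS⟩
  have hc : ∀ y : Z, ∃ q ∈ t, dist (fun j : Fin n => f^[j] y) q < ε / 2 := by
    intro y
    have := ht (Set.mem_univ (fun j : Fin n => f^[j] y))
    simpa using this
  choose g hg hgd using hc
  refine Finset.card_le_card_of_injOn g (fun y _ => by simpa using hg y) ?_
  intro y hy y' hy' hyy
  by_contra hne
  obtain ⟨j, hj, hd⟩ := hS y hy y' hy' hne
  have h1 := dist_triangle_right (fun j : Fin n => f^[j] y) (fun j : Fin n => f^[j] y') (g y)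
  have h2 := hgd y
  have h3 := hgd y'
  rw [← hyy] at h3
  have h4 := dist_le_pi_dist (fun j : Fin n => f^[j] y) (fun j : Fin n => f^[j] y') ⟨j, hj⟩
  simp only at h4
  linarith

theorem hs_entropy {Z : Type*} [MetricSpace Z] [CompactSpace Z] {f : Z → Z} {A B : Set Z}
    (hA : IsClosed A) (hB : IsClosed B) (hAn : A.Nonempty) (hBn : B.Nonempty)
    (hAB : Disjoint A B) {N : ℕ} (hN : 0 < N) (h1 : A ∪ B ⊆ f^[N] '' A)
    (h2 : A ∪ B ⊆ f^[N] '' B) : 0 < topEnt f := by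
  obtain ⟨δ, hδ, hdisj⟩ := hAB.exists_thickenings hA.isCompact hB
  have hdist : ∀ x ∈ A, ∀ y ∈ B, δ ≤ dist x y := by
    intro x hx y hy
    by_contra hc
    push Not at hc
    exact Set.disjoint_left.1 hdisj (Metric.mem_thickening_iff.2 ⟨x, hx, by rwa [dist_comm]⟩)
      (Metric.self_subset_thickening hδ B hy)
  set H : Bool → Set Z := fun b => if b then A else B with hH
  have hw := hs_word (f := f) (H := H) (N := N) (by intro b; cases b <;> simpa [H])
    (by
      intro b b'
      cases b <;> cases b' <;> simp only [H, if_true, Bool.false_eq_true, if_false]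
      · exact Set.subset_union_right.trans h2
      · exact Set.subset_union_left.trans h2
      · exact Set.subset_union_right.trans h1
      · exact Set.subset_union_left.trans h1)
  have hHd : ∀ b b', b ≠ b' → ∀ x ∈ H b, ∀ y ∈ H b', δ / 2 < dist x y := by
    intro b b' hbb x hx y hy
    cases b <;> cases b' <;> simp only [H, if_true, Bool.false_eq_true, if_false] at hx hy
    · exact absurd rfl hbb
    · have := hdist y hy x hx
      rw [dist_comm] at this; linarith
    · have := hdist x hx y hy
      linarith
    · exact absurd rfl hbb
  have hsep : ∀ n : ℕ, 2 ^ n ≤ sepNum f Set.univ (N * n) (δ / 2) := by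
    intro n
    apply le_csSup (hs_bdd f (N * n) (half_pos hδ))
    have hex : ∀ w : Fin n → Bool, ∃ x, ∀ i : Fin n, f^[N * i] x ∈ H (w i) := by
      intro w
      obtain ⟨x, hx⟩ := hw n (fun i => if h : i < n then w ⟨i, h⟩ else false)
      refine ⟨x, fun i => ?_⟩
      have := hx i i.2.le
      simpa using this
    choose pt hpt using hex
    have hs : ∀ w w' : Fin n → Bool, w ≠ w' →
        ∃ j < N * n, δ / 2 < dist (f^[j] (pt w)) (f^[j] (pt w')) := by
      intro w w' hww
      obtain ⟨i, hi⟩ := Function.ne_iff.1 hww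
      exact ⟨N * i, Nat.mul_lt_mul_of_pos_left i.2 hN, hHd _ _ hi _ (hpt w i) _ (hpt w' i)⟩
    have hinj : Function.Injective pt := by
      intro w w' hp
      by_contra hne
      obtain ⟨j, -, hj⟩ := hs w w' hne
      rw [hp, dist_self] at hj
      linarith
    refine ⟨Finset.univ.map ⟨pt, hinj⟩, Set.subset_univ _, by simp, ?_⟩
    intro y hy y' hy' hne
    simp only [Finset.mem_map, Finset.mem_univ, true_and, Function.Embedding.coeFn_mk] at hy hy'
    obtain ⟨w, rfl⟩ := hy
    obtain ⟨w', rfl⟩ := hy'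
    exact hs w w' (fun h => hne (by rw [h]))
  have hent : ((Real.log 2 / N : ℝ) : EReal) ≤ entScale f Set.univ (δ / 2) := by
    unfold entScale
    apply le_limsup_of_frequently_le'
    rw [frequently_atTop]
    intro m
    refine ⟨N * (m + 1), by nlinarith, ?_⟩
    rw [EReal.coe_le_coe_iff]
    have h3 : Real.log ((2:ℝ) ^ (m+1)) ≤ Real.log (sepNum f Set.univ (N * (m+1)) (δ / 2)) := by
      apply Real.log_le_log (by positivity)
      exact_mod_cast hsep (m+1)
    rw [Real.log_pow] at h3
    have hN' : (0:ℝ) < N := by exact_mod_cast hN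
    rw [div_le_div_iff₀ hN' (by push_cast; positivity)]
    push_cast at h3 ⊢
    nlinarith
  have hpos : (0 : EReal) < ((Real.log 2 / N : ℝ) : EReal) := by
    have hN' : (0:ℝ) < N := by exact_mod_cast hN
    have := Real.log_pos (by norm_num : (1:ℝ) < 2)
    exact_mod_cast div_pos this hN'
  refine hpos.trans_le (hent.trans ?_)
  unfold topEnt
  exact le_iSup₂ (f := fun (ε : ℝ) (_ : (0:ℝ) < ε) => entScale f Set.univ ε) (δ/2) (half_pos hδ)

theorem hs_Icc_preconn {a b : ℝ} (x y : Set.Icc a b) : IsPreconnected (Set.Icc x y) := by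
  rw [← Topology.IsInducing.subtypeVal.isPreconnected_image]
  have : Subtype.val '' Set.Icc x y = Set.Icc (x:ℝ) y := by
    ext z
    constructor
    · rintro ⟨w, hw, rfl⟩
      exact hw
    · intro hz
      exact ⟨⟨z, x.2.1.trans hz.1, hz.2.trans y.2.2⟩, hz, rfl⟩
  rw [this]
  exact isPreconnected_Icc

/-- A topologically transitive continuous map of a nondegenerate compact interval
with the approximate product property has strictly positive topological entropy. -/
theorem interval_transitive_app_topEnt_pos
    (a b : ℝ) (hab : a < b) (f : Set.Icc a b → Set.Icc a b) (hf : Continuous f)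
    (htrans : ∀ U V : Set (Set.Icc a b), IsOpen U → IsOpen V →
      U.Nonempty → V.Nonempty → ∃ n : ℕ, ((f^[n]) ⁻¹' U ∩ V).Nonempty)
    (happ : ApproxProduct f) :
    0 < topEnt f := by
  have hI := hs_Icc_preconn (a := a) (b := b)
  let xa : Set.Icc a b := ⟨a, le_rfl, hab.le⟩
  let xb : Set.Icc a b := ⟨b, hab.le, le_rfl⟩
  obtain ⟨p, hp⟩ : ∃ p, f p = p := by
    obtain ⟨p, -, hp⟩ := (hI xa xb).intermediate_value₂ (a := xa) (b := xb)
      ⟨le_rfl, hab.le⟩ ⟨hab.le, le_rfl⟩ continuous_id.continuousOn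
      hf.continuousOn (f xa).2.1 (f xb).2.2
    exact ⟨p, hp.symm⟩
  obtain ⟨A, B, hA, hB, hAn, hBn, hAB, N, hN, h1, h2⟩ : ∃ A B : Set (Set.Icc a b),
      IsClosed A ∧ IsClosed B ∧ A.Nonempty ∧ B.Nonempty ∧ Disjoint A B ∧ ∃ N, 0 < N ∧
      A ∪ B ⊆ f^[N] '' A ∧ A ∪ B ⊆ f^[N] '' B := by
    by_cases hpb : p < xb
    · exact hs_right hI hf htrans hp hpb
    · have hpa : xa < p := by
        have h : xb ≤ p := not_lt.1 hpb
        exact lt_of_lt_of_le (show xa < xb from hab) h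
      refine hs_right (Y := (Set.Icc a b)ᵒᵈ) (f := f) (p := p) (e := xa) ?_ hf htrans hp hpa
      intro x y
      have := hI (OrderDual.ofDual y) (OrderDual.ofDual x)
      have e : Set.Icc x y =
          OrderDual.ofDual ⁻¹' Set.Icc (OrderDual.ofDual y) (OrderDual.ofDual x) := by
        ext z
        exact and_comm
      rw [e]
      exact this
  exact hs_entropy hA hB hAn hBn hAB hN h1 h2
end Defs
end

section
/- Let (X,d) be a compact metric space and f : X → X a continuous map such that (X,f) has the approximate product property. Then the set of ergodic f-invariant Borel probability measures on X is dense in the set of all f-invariant Borel probability measures on X, equipped with the weak-* topology. -/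
open MeasureTheory Filter Set

section Defs

variable {X : Type*} [MetricSpace X]

open scoped Topology BoundedContinuousFunction in
lemma exists_invariant_aux {Y : Type*} [MetricSpace Y] [CompactSpace Y] [MeasurableSpace Y]
    [BorelSpace Y] [Nonempty Y] (f : Y → Y) (hf : Continuous f) :
    ∃ ν : ProbabilityMeasure Y, ∀ φ : Y →ᵇ ℝ, ∫ x, φ (f x) ∂(ν : Measure Y) = ∫ x, φ x ∂(ν : Measure Y) := by
  obtain ⟨x⟩ := ‹Nonempty Y›
  let m : ℕ → Measure Y := fun n =>
    ((n + 1 : NNReal))⁻¹ • ∑ i ∈ Finset.range (n + 1), Measure.dirac (f^[i] x)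
  have hm : ∀ n, IsProbabilityMeasure (m n) := by
    intro n
    constructor
    simp only [m, Measure.smul_apply, Measure.finsetSum_apply]
    simp only [Measure.dirac_apply_of_mem (mem_univ _), Finset.sum_const, Finset.card_range]
    rw [ENNReal.smul_def, smul_eq_mul, nsmul_eq_mul, mul_one]
    rw [ENNReal.coe_inv (by positivity)]
    push_cast
    apply ENNReal.inv_mul_cancel <;> simp
  have hint : ∀ n, ∀ φ : Y → ℝ, Continuous φ → ∫ y, φ y ∂(m n) =
      ((n : ℝ) + 1)⁻¹ * ∑ i ∈ Finset.range (n + 1), φ (f^[i] x) := by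
    intro n φ hφ
    simp only [m]
    rw [integral_smul_nnreal_measure, integral_finsetSum_measure]
    · simp only [integral_dirac, NNReal.smul_def, smul_eq_mul]
      push_cast
      rfl
    · intro i _
      exact integrable_dirac (by simp)
  let P : ℕ → ProbabilityMeasure Y := fun n => ⟨m n, hm n⟩
  obtain ⟨ν, -, hν⟩ := isCompact_univ.ultrafilter_le_nhds ((hyperfilter ℕ : Ultrafilter ℕ).map P) (by simp)
  have hν' : Tendsto P (hyperfilter ℕ : Filter ℕ) (𝓝 ν) := hν
  refine ⟨ν, fun φ => ?_⟩
  rw [ProbabilityMeasure.tendsto_iff_forall_integral_tendsto] at hν'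
  have h1 := hν' φ
  have h2 := hν' (φ.compContinuous ⟨f, hf⟩)
  have h3 : Tendsto (fun n => ∫ y, (φ.compContinuous ⟨f, hf⟩) y ∂(P n : Measure Y)
      - ∫ y, φ y ∂(P n : Measure Y)) (hyperfilter ℕ : Filter ℕ) (𝓝 0) := by
    have h4 : Tendsto (fun n : ℕ => (2 * ‖φ‖) * (1 / ((n : ℝ) + 1))) atTop (𝓝 0) := by
      simpa using tendsto_one_div_add_atTop_nhds_zero_nat.const_mul (2 * ‖φ‖)
    refine squeeze_zero_norm (fun n => ?_) (h4.mono_left (Nat.hyperfilter_le_atTop))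
    change ‖∫ y, φ (f y) ∂(m n) - ∫ y, φ y ∂(m n)‖ ≤ _
    rw [hint n _ φ.continuous, hint n (fun y => φ (f y)) (φ.continuous.comp hf), ← mul_sub, ← Finset.sum_sub_distrib]
    have : ∀ i, φ (f (f^[i] x)) - φ (f^[i] x) = φ (f^[i+1] x) - φ (f^[i] x) := by
      intro i; rw [Function.iterate_succ_apply']
    simp only [this]
    rw [Finset.sum_range_sub (fun i => φ (f^[i] x)), norm_mul, Real.norm_of_nonneg (by positivity),
      mul_comm, one_div]
    gcongr
    calc _ ≤ ‖φ (f^[n+1] x)‖ + ‖φ (f^[0] x)‖ := norm_sub_le _ _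
      _ ≤ ‖φ‖ + ‖φ‖ := add_le_add (φ.norm_coe_le_norm _) (φ.norm_coe_le_norm _)
      _ = _ := by ring
  have h5 := tendsto_nhds_unique h3 (h2.sub h1)
  have : ∫ y, (φ.compContinuous ⟨f, hf⟩) y ∂(ν : Measure Y) - ∫ y, φ y ∂(ν : Measure Y) = 0 := h5.symm
  exact sub_eq_zero.1 this

open scoped Topology BoundedContinuousFunction ENNReal in
lemma exists_ergodic_aux {Y : Type*} [MetricSpace Y] [CompactSpace Y] [MeasurableSpace Y]
    [BorelSpace Y] [Nonempty Y] (f : Y → Y) (hf : Continuous f) :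
    ∃ ν : Measure Y, IsProbabilityMeasure ν ∧ Ergodic f ν := by
  let I : Set (ProbabilityMeasure Y) := {ν | ∀ φ : Y →ᵇ ℝ,
    ∫ x, φ (f x) ∂(ν : Measure Y) = ∫ x, φ x ∂(ν : Measure Y)}
  let T : ProbabilityMeasure Y → ((Y →ᵇ ℝ) → ℝ) := fun ν φ => ∫ x, φ x ∂(ν : Measure Y)
  have hc : ∀ φ : Y →ᵇ ℝ, Continuous fun ν : ProbabilityMeasure Y => ∫ x, φ x ∂(ν : Measure Y) :=
    fun φ => ProbabilityMeasure.continuous_integral_boundedContinuousFunction φ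
  have hT : Continuous T := continuous_pi hc
  have hIc : IsClosed I := by
    have : I = ⋂ φ : Y →ᵇ ℝ, {ν : ProbabilityMeasure Y | ∫ x, φ (f x) ∂(ν : Measure Y) = ∫ x, φ x ∂(ν : Measure Y)} := by
      ext; simp [I]
    rw [this]
    exact isClosed_iInter fun φ => isClosed_eq (hc (φ.compContinuous ⟨f, hf⟩)) (hc φ)
  have hIne : I.Nonempty := exists_invariant_aux f hf
  obtain ⟨_, ⟨⟨ν, hνI, rfl⟩, hext⟩⟩ := (hIc.isCompact.image hT).extremePoints_nonempty (hIne.image T)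
  have hmp : ∀ ν : Measure Y, IsProbabilityMeasure ν → ((MeasurePreserving f ν ν) ↔
    ∀ φ : Y →ᵇ ℝ, ∫ x, φ (f x) ∂ν = ∫ x, φ x ∂ν) := by
    intro ν hν
    constructor
    · intro h φ
      conv_rhs => rw [← h.map_eq]
      rw [integral_map hf.measurable.aemeasurable φ.continuous.aestronglyMeasurable]
    · intro h
      refine ⟨hf.measurable, ?_⟩
      have := Measure.isProbabilityMeasure_map (μ := ν) hf.measurable.aemeasurable
      apply ext_of_forall_integral_eq_of_IsFiniteMeasure
      intro φ
      rw [integral_map hf.measurable.aemeasurable φ.continuous.aestronglyMeasurable]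
      exact h φ
  refine ⟨ν, inferInstance, Ergodic.of_mem_extremePoints ?_⟩
  refine mem_extremePoints_iff_left.2 ⟨⟨(hmp _ inferInstance).2 hνI, inferInstance⟩, ?_⟩
  rintro ν₁ ⟨h1, p1⟩ ν₂ ⟨h2, p2⟩ ⟨a, b, ha, hb, hab, h⟩
  have ha' : a ≠ ∞ := by rintro rfl; simp at hab
  have hb' : b ≠ ∞ := by rintro rfl; simp at hab
  have key := hext (x₁ := T ⟨ν₁, p1⟩) ⟨⟨ν₁, p1⟩, (hmp _ p1).1 h1, rfl⟩ (x₂ := T ⟨ν₂, p2⟩) ⟨⟨ν₂, p2⟩, (hmp _ p2).1 h2, rfl⟩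
    ⟨a.toReal, b.toReal, ENNReal.toReal_pos ha.ne' ha', ENNReal.toReal_pos hb.ne' hb',
      by rw [← ENNReal.toReal_add ha' hb', hab]; rfl, ?_⟩
  · apply ext_of_forall_integral_eq_of_IsFiniteMeasure
    intro φ
    exact congrFun key φ
  · funext φ
    change a.toReal * ∫ x, φ x ∂ν₁ + b.toReal * ∫ x, φ x ∂ν₂ = ∫ x, φ x ∂(ν : Measure Y)
    rw [← h, integral_add_measure, integral_smul_measure, integral_smul_measure]
    · rfl
    · exact (φ.integrable ν₁).smul_measure ha'
    · exact (φ.integrable ν₂).smul_measure hb'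

open scoped Topology BoundedContinuousFunction in
lemma exists_points_aux {Y ι : Type*} [MetricSpace Y] [MeasurableSpace Y]
    [BorelSpace Y] (μ : Measure Y) [IsProbabilityMeasure μ] (F : Finset ι) (H : ι → Y →ᵇ ℝ)
    (ε : ℝ) (hε : 0 < ε) :
    ∃ L : ℕ, 0 < L ∧ ∃ x : ℕ → Y, ∀ φ ∈ F,
      |∑ i ∈ Finset.range L, (H φ (x i) - ∫ y, H φ y ∂μ)| ≤ ε * L := by
  let P : Measure (ℕ → Y) := Measure.infinitePi (fun _ => μ)
  have hmeas : ∀ φ, Measurable (H φ) := fun φ => (H φ).continuous.measurable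
  have hmp : ∀ i : ℕ, MeasurePreserving (fun ω : ℕ → Y => ω i) P μ := fun i =>
    measurePreserving_eval_infinitePi (fun _ => μ) i
  have h1 : ∀ φ ∈ F, ∀ᵐ ω ∂P, Tendsto (fun n : ℕ => (∑ i ∈ Finset.range n, H φ (ω i)) / n) atTop
      (𝓝 (∫ y, H φ y ∂μ)) := by
    intro φ _
    have e : ∫ ω, H φ (ω 0) ∂P = ∫ y, H φ y ∂μ := by
      rw [← (hmp 0).map_eq, integral_map (hmp 0).measurable.aemeasurable
        (hmeas φ).aestronglyMeasurable]
    rw [← e]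
    refine ProbabilityTheory.strong_law_ae_real (fun i (ω : ℕ → Y) => H φ (ω i)) ?_ ?_ ?_
    · exact (hmp 0).integrable_comp_of_integrable ((H φ).integrable μ)
    · intro i j hij
      exact (ProbabilityTheory.iIndepFun_infinitePi (P := fun _ : ℕ => μ) (X := fun _ => H φ)
        (fun _ => hmeas φ)).indepFun hij
    · intro i
      have : ProbabilityTheory.IdentDistrib (fun ω : ℕ → Y => ω i) (fun ω : ℕ → Y => ω 0) P P :=
        ⟨(hmp i).measurable.aemeasurable, (hmp 0).measurable.aemeasurable,
          by rw [(hmp i).map_eq, (hmp 0).map_eq]⟩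
      exact this.comp (hmeas φ)
  have h2 := (Finset.eventually_all F).2 h1
  obtain ⟨x, hx⟩ := h2.exists
  have h3 : ∀ᶠ n : ℕ in atTop, ∀ φ ∈ F, dist ((∑ i ∈ Finset.range n, H φ (x i)) / n)
      (∫ y, H φ y ∂μ) < ε :=
    (Finset.eventually_all F).2 fun φ hφ => Metric.tendsto_nhds.1 (hx φ hφ) ε hε
  obtain ⟨L, hL, hL0⟩ := (h3.and (eventually_gt_atTop 0)).exists
  refine ⟨L, hL0, x, fun φ hφ => ?_⟩
  have h4 := (hL φ hφ).le
  have hLp : (0 : ℝ) < L := by exact_mod_cast hL0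
  rw [Real.dist_eq] at h4
  rw [Finset.sum_sub_distrib]
  simp only [Finset.sum_const, Finset.card_range, nsmul_eq_mul]
  have e : (∑ i ∈ Finset.range L, H φ (x i)) - L * ∫ y, H φ y ∂μ =
      ((∑ i ∈ Finset.range L, H φ (x i)) / L - ∫ y, H φ y ∂μ) * L := by
    field_simp
  rw [e, abs_mul, abs_of_pos hLp]
  gcongr

lemma window_aux (G : ℕ → ℝ) (τ : ℕ → ℕ) (W : ℕ) (c D : ℝ) (hc : 0 ≤ c) (hD : 0 ≤ D)
    (h0 : τ 0 = 0) (hlt : ∀ q, τ q < τ (q + 1)) (hW : ∀ q, τ (q + 1) ≤ τ q + W)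
    (hG : ∀ q, |G (τ (q + 1)) - G (τ q)| ≤ c * ((τ (q + 1) : ℝ) - τ q))
    (hstep : ∀ i, |G (i + 1) - G i| ≤ D) (a b : ℕ) (hab : a ≤ b) :
    |G b - G a| ≤ c * ((b : ℝ) - a) + (2 * D + c) * W := by
  have hmono : StrictMono τ := strictMono_nat_of_lt_succ hlt
  have hex : ∀ a : ℕ, ∃ q, τ q ≤ a ∧ a < τ (q + 1) := by
    intro a
    induction a with
    | zero => exact ⟨0, by omega, by have := hlt 0; omega⟩
    | succ a ih =>
      obtain ⟨q, h1, h2⟩ := ih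
      by_cases h : a + 1 < τ (q + 1)
      · exact ⟨q, by omega, h⟩
      · exact ⟨q + 1, by omega, by have := hlt (q + 1); omega⟩
  have hsteps : ∀ i k : ℕ, |G (i + k) - G i| ≤ D * k := by
    intro i k
    induction k with
    | zero => simp
    | succ k ih =>
      have := hstep (i + k)
      rw [← add_assoc]
      push_cast
      calc |G (i + k + 1) - G i| = |(G (i + k + 1) - G (i + k)) + (G (i + k) - G i)| := by ring_nf
        _ ≤ _ := abs_add_le _ _
        _ ≤ D * (k + 1) := by linarith
  have hblocks : ∀ p k : ℕ, |G (τ (p + k)) - G (τ p)| ≤ c * ((τ (p + k) : ℝ) - τ p) := by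
    intro p k
    induction k with
    | zero => simp
    | succ k ih =>
      have := hG (p + k)
      rw [← add_assoc]
      calc |G (τ (p + k + 1)) - G (τ p)|
          = |(G (τ (p + k + 1)) - G (τ (p + k))) + (G (τ (p + k)) - G (τ p))| := by ring_nf
        _ ≤ _ := abs_add_le _ _
        _ ≤ _ := by linarith
  obtain ⟨p, hp1, hp2⟩ := hex a
  obtain ⟨q, hq1, hq2⟩ := hex b
  have hpq : p ≤ q := by
    by_contra hcon
    have : τ (q + 1) ≤ τ p := hmono.monotone (by omega)
    omega
  obtain ⟨k, rfl⟩ := Nat.exists_eq_add_of_le hpq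
  have hWp := hW p
  have hWq := hW (p + k)
  obtain ⟨i, hi⟩ := Nat.exists_eq_add_of_le hp1
  obtain ⟨j, hj⟩ := Nat.exists_eq_add_of_le hq1
  have e1 := hsteps (τ p) i
  have e2 := hsteps (τ (p + k)) j
  rw [← hi] at e1
  rw [← hj] at e2
  have e3 := hblocks p k
  have hi' : (i : ℝ) ≤ W := by exact_mod_cast (by omega : i ≤ W)
  have hj' : (j : ℝ) ≤ W := by exact_mod_cast (by omega : j ≤ W)
  have hq1' : (τ (p + k) : ℝ) ≤ b := by exact_mod_cast hq1
  have hp2' : (a : ℝ) - τ p ≤ W := by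
    have : (a : ℝ) = τ p + i := by exact_mod_cast hi
    linarith
  have f1 : D * i ≤ D * W := by gcongr
  have f2 : D * j ≤ D * W := by gcongr
  have f3 : c * ((τ (p + k) : ℝ) - τ p) ≤ c * ((b : ℝ) - a + W) := by
    apply mul_le_mul_of_nonneg_left _ hc
    linarith
  rw [abs_le] at *
  constructor <;> linarith [e1.1, e1.2, e2.1, e2.2, e3.1, e3.2]

lemma block_aux {Y : Type*} [MetricSpace Y] (g : Y → ℝ) (D η ε δ : ℝ)
    (hgD : ∀ y, |g y| ≤ D) (hη : ∀ x y, dist x y ≤ η → |g x - g y| ≤ ε)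
    (u w : ℕ → Y) (n r : ℕ) (hε : 0 ≤ ε) (hD : 0 ≤ D)
    (hcard : (((Finset.range n).filter (fun j => η < dist (u j) (w j))).card : ℝ) ≤ δ * n)
    (hr : (r : ℝ) ≤ δ * n) :
    |∑ i ∈ Finset.range (n + r), g (u i) - ∑ i ∈ Finset.range n, g (w i)| ≤
      n * (ε + 3 * δ * D) := by
  rw [Finset.sum_range_add]
  have h1 : |∑ i ∈ Finset.range r, g (u (n + i))| ≤ D * r := by
    refine (Finset.abs_sum_le_sum_abs _ _).trans ?_
    refine (Finset.sum_le_sum fun i _ => hgD _).trans ?_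
    simp [mul_comm]
  have h2 : |∑ i ∈ Finset.range n, g (u i) - ∑ i ∈ Finset.range n, g (w i)| ≤
      n * ε + 2 * D * ((Finset.range n).filter (fun j => η < dist (u j) (w j))).card := by
    rw [← Finset.sum_sub_distrib]
    refine (Finset.abs_sum_le_sum_abs _ _).trans ?_
    have : ∀ i ∈ Finset.range n, |g (u i) - g (w i)| ≤
        ε + (if η < dist (u i) (w i) then 2 * D else 0) := by
      intro i _
      split_ifs with h
      · have := abs_sub (g (u i)) (g (w i))
        linarith [hgD (u i), hgD (w i)]
      · simpa using hη _ _ (not_lt.1 h)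
    refine (Finset.sum_le_sum this).trans ?_
    rw [Finset.sum_add_distrib, ← Finset.sum_filter]
    simp [mul_comm]
  have h3 : D * r ≤ D * (δ * n) := by gcongr
  have h4 := mul_le_mul_of_nonneg_left hcard (by positivity : 0 ≤ 2 * D)
  calc _ = |(∑ i ∈ Finset.range n, g (u i) - ∑ i ∈ Finset.range n, g (w i)) +
        ∑ i ∈ Finset.range r, g (u (n + i))| := by ring_nf
    _ ≤ _ := abs_add_le _ _
    _ ≤ _ := by linarith

open scoped Topology BoundedContinuousFunction in
lemma exists_orbit_aux {Y : Type*} [MetricSpace Y] [CompactSpace Y] [MeasurableSpace Y]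
    [BorelSpace Y] (f : Y → Y) (hf : Continuous f) (happ : ApproxProduct f)
    (μ : Measure Y) [IsProbabilityMeasure μ] (hμ : MeasurePreserving f μ μ)
    (F : Finset (Y →ᵇ ℝ)) (ε : ℝ) (hε : 0 < ε) :
    ∃ z : Y, ∃ N : ℕ, 0 < N ∧ ∀ φ ∈ F, ∀ a : ℕ,
      |∑ i ∈ Finset.range N, (φ (f^[i] (f^[a] z)) - ∫ y, φ y ∂μ)| ≤ ε * N := by
  obtain ⟨e, he⟩ : ∃ e, e = ε / 4 := ⟨_, rfl⟩
  have he0 : 0 < e := by rw [he]; positivity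
  obtain ⟨D, hDdef⟩ : ∃ D, D = 1 + ∑ φ ∈ F, 2 * ‖φ‖ := ⟨_, rfl⟩
  have hD0 : 0 < D := by
    have : 0 ≤ ∑ φ ∈ F, 2 * ‖φ‖ := Finset.sum_nonneg fun φ _ => by positivity
    linarith
  have hgD : ∀ φ ∈ F, ∀ y, |φ y - ∫ y, φ y ∂μ| ≤ D := by
    intro φ hφ y
    have h1 : ‖∫ y, φ y ∂μ‖ ≤ ‖φ‖ := φ.norm_integral_le_norm μ
    have h2 := φ.norm_coe_le_norm y
    have h3 : 2 * ‖φ‖ ≤ ∑ φ ∈ F, 2 * ‖φ‖ :=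
      Finset.single_le_sum (f := fun φ : Y →ᵇ ℝ => 2 * ‖φ‖) (fun φ _ => by positivity) hφ
    have h4 := norm_sub_le (φ y) (∫ y, φ y ∂μ)
    rw [Real.norm_eq_abs] at h4
    linarith
  obtain ⟨δ, hδ0, hδ1, hδD⟩ : ∃ δ : ℝ, 0 < δ ∧ δ ≤ 1 ∧ 3 * δ * D ≤ e := by
    refine ⟨min 1 (e / (3 * D)), lt_min one_pos (by positivity), min_le_left _ _, ?_⟩
    have := min_le_right 1 (e / (3 * D))
    rw [le_div_iff₀ (by positivity)] at this
    linarith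
  obtain ⟨η, hη0, hη⟩ : ∃ η : ℝ, 0 < η ∧ ∀ φ ∈ F, ∀ x y, dist x y ≤ η → |φ x - φ y| ≤ e := by
    have : ∀ φ ∈ F, ∀ᶠ η in 𝓝[>] (0 : ℝ), ∀ x y, dist x y ≤ η → |φ x - φ y| ≤ e := by
      intro φ _
      have huc := CompactSpace.uniformContinuous_of_continuous φ.continuous
      obtain ⟨d, hd, h⟩ := Metric.uniformContinuous_iff.1 huc e he0
      filter_upwards [Ioo_mem_nhdsGT hd] with η hη x y hxy
      exact (h (hxy.trans_lt hη.2)).le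
    have h2 := (Finset.eventually_all F).2 this
    obtain ⟨η, h, h'⟩ := (h2.and self_mem_nhdsWithin).exists
    exact ⟨η, h', h⟩
  obtain ⟨M, hM⟩ := happ δ δ η hδ0 hδ0 hη0
  obtain ⟨n, hn⟩ : ∃ n, n = M + 1 := ⟨_, rfl⟩
  have hn0 : 0 < n := by omega
  have hn0' : (0 : ℝ) < n := by exact_mod_cast hn0
  let H : (Y →ᵇ ℝ) → (Y →ᵇ ℝ) := fun φ =>
    ∑ j ∈ Finset.range n, φ.compContinuous ⟨f^[j], hf.iterate j⟩
  have hH : ∀ φ y, H φ y = ∑ j ∈ Finset.range n, φ (f^[j] y) := by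
    intro φ y
    simp [H]
  have hHint : ∀ φ, ∫ y, H φ y ∂μ = n * ∫ y, φ y ∂μ := by
    intro φ
    simp only [hH]
    rw [integral_finsetSum]
    · have : ∀ j ∈ Finset.range n, ∫ y, φ (f^[j] y) ∂μ = ∫ y, φ y ∂μ := by
        intro j _
        conv_rhs => rw [← (hμ.iterate j).map_eq]
        rw [integral_map (hf.iterate j).measurable.aemeasurable
          φ.continuous.aestronglyMeasurable]
      rw [Finset.sum_congr rfl this]
      simp
    · intro j _
      exact (φ.compContinuous ⟨f^[j], hf.iterate j⟩).integrable μ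
  obtain ⟨L, hL0, x, hx⟩ := exists_points_aux μ F H (e * n) (by positivity)
  obtain ⟨t, ht0, ht1, z, hz⟩ := hM n (by omega) (fun k => x (k % L))
  obtain ⟨s, hs⟩ : ∃ s, s = segStart (fun _ => n) t := ⟨_, rfl⟩
  have hs0 : s 0 = 0 := by simp [hs, segStart]
  have hs1 : ∀ k, s (k + 1) = s k + (n + (t k - 1)) := by
    intro k
    have := ht0 k
    simp only [hs, segStart, Finset.sum_range_succ]
    omega
  have htr : ∀ k, ((t k - 1 : ℕ) : ℝ) ≤ δ * n := by
    intro k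
    rw [Nat.cast_sub (ht0 k)]
    have := ht1 k
    push_cast
    linarith
  have htn : ∀ k, t k - 1 ≤ n := by
    intro k
    have h1 := htr k
    have h2 : δ * n ≤ 1 * n := by gcongr
    have h3 : ((t k - 1 : ℕ) : ℝ) ≤ n := by linarith
    exact_mod_cast h3
  have hsL : ∀ k i, s k + n * i ≤ s (k + i) ∧ s (k + i) ≤ s k + 2 * n * i := by
    intro k i
    induction i with
    | zero => simp
    | succ i ih =>
      rw [← add_assoc, hs1, mul_add, mul_add]
      have := htn (k + i)
      omega
  let τ : ℕ → ℕ := fun q => s (q * L)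
  have hτ1 : ∀ q, τ (q + 1) = s (q * L + L) := by
    intro q
    simp only [τ, add_mul, one_mul]
  have hnL : 0 < n * L := by positivity
  obtain ⟨N, hN⟩ := exists_nat_gt ((2 * D + 3 * e) * ((2 * n * L : ℕ) : ℝ) / e)
  have hN0 : 0 < N := by
    have : (0 : ℝ) < N := lt_of_le_of_lt (by positivity) hN
    exact_mod_cast this
  refine ⟨z, N, hN0, fun φ hφ a => ?_⟩
  obtain ⟨g, hg⟩ : ∃ g : Y → ℝ, g = fun y => φ y - ∫ y, φ y ∂μ := ⟨_, rfl⟩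
  obtain ⟨G, hGdef⟩ : ∃ G : ℕ → ℝ, G = fun m => ∑ i ∈ Finset.range m, g (f^[i] z) := ⟨_, rfl⟩
  have hGsub : ∀ a r, G (a + r) - G a = ∑ i ∈ Finset.range r, g (f^[a + i] z) := by
    intro a r
    simp only [hGdef, Finset.sum_range_add]
    ring
  have hblock : ∀ k, |G (s (k + 1)) - G (s k) - ∑ j ∈ Finset.range n, g (f^[j] (x (k % L)))| ≤
      n * (e + 3 * δ * D) := by
    intro k
    rw [hs1, hGsub]
    refine block_aux g D η e δ ?_ ?_ (fun i => f^[s k + i] z) (fun i => f^[i] (x (k % L))) n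
      (t k - 1) he0.le hD0.le ?_ (htr k)
    · intro y; rw [hg]; exact hgD φ hφ y
    · intro y y' hyy; rw [hg]; simpa using hη φ hφ y y' hyy
    · rw [hs]; exact hz k
  have hsuper : ∀ q, |G (τ (q + 1)) - G (τ q)| ≤ 3 * e * ((τ (q + 1) : ℝ) - τ q) := by
    intro q
    have h1 : G (τ (q + 1)) - G (τ q) =
        ∑ i ∈ Finset.range L, (G (s (q * L + i + 1)) - G (s (q * L + i))) := by
      rw [hτ1]
      exact (Finset.sum_range_sub (fun i => G (s (q * L + i))) L).symm
    have h2 : |∑ i ∈ Finset.range L, ∑ j ∈ Finset.range n, g (f^[j] (x i))| ≤ e * n * L := by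
      refine le_trans (le_of_eq ?_) (hx φ hφ)
      congr 1
      refine Finset.sum_congr rfl fun i _ => ?_
      rw [hH, hHint, hg, Finset.sum_sub_distrib]
      simp
    have h3 : |∑ i ∈ Finset.range L, (G (s (q * L + i + 1)) - G (s (q * L + i))
        - ∑ j ∈ Finset.range n, g (f^[j] (x i)))| ≤ L * (n * (e + 3 * δ * D)) := by
      refine (Finset.abs_sum_le_sum_abs _ _).trans ?_
      refine (Finset.sum_le_sum (g := fun _ => n * (e + 3 * δ * D)) fun i hi => ?_).trans (by simp)
      have := hblock (q * L + i)
      rwa [Nat.mul_comm q L, Nat.mul_add_mod, Nat.mod_eq_of_lt (Finset.mem_range.1 hi),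
        Nat.mul_comm L q] at this
    have h4 : (n : ℝ) * L ≤ (τ (q + 1) : ℝ) - τ q := by
      have := (hsL (q * L) L).1
      rw [hτ1, le_sub_iff_add_le']
      exact_mod_cast this
    have h5 : 3 * e * ((n : ℝ) * L) ≤ 3 * e * ((τ (q + 1) : ℝ) - τ q) := by gcongr
    rw [Finset.sum_sub_distrib, ← h1] at h3
    have h6 : (L : ℝ) * (n * (e + 3 * δ * D)) ≤ L * (n * (e + e)) := by gcongr
    have h7 := abs_add_le (G (τ (q + 1)) - G (τ q) - ∑ i ∈ Finset.range L,
      ∑ j ∈ Finset.range n, g (f^[j] (x i))) (∑ i ∈ Finset.range L,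
      ∑ j ∈ Finset.range n, g (f^[j] (x i)))
    rw [sub_add_cancel] at h7
    linarith
  have hwin := window_aux G τ (2 * n * L) (3 * e) D (by positivity) hD0.le (by simp [τ, hs0])
    (fun q => by have := (hsL (q * L) L).1; rw [hτ1]; simp only [τ]; omega)
    (fun q => by rw [hτ1]; exact (hsL (q * L) L).2) hsuper
    (fun i => by rw [hGsub]; simp only [hg, Finset.sum_range_one]; exact hgD φ hφ _)
    a (a + N) (by omega)
  rw [hGsub] at hwin
  rw [div_lt_iff₀ he0] at hN
  have e1 : ∀ i, φ (f^[i] (f^[a] z)) - ∫ y, φ y ∂μ = g (f^[a + i] z) := by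
    intro i
    rw [hg, add_comm a i, Function.iterate_add_apply]
  simp only [e1]
  push_cast at hwin hN
  have e2 : ε * N = 3 * e * N + e * N := by rw [he]; ring
  rw [e2]
  linarith

open scoped Topology BoundedContinuousFunction in
lemma exists_close_ergodic_aux {Y : Type*} [MetricSpace Y] [CompactSpace Y] [MeasurableSpace Y]
    [BorelSpace Y] (f : Y → Y) (hf : Continuous f) (happ : ApproxProduct f)
    (μ : Measure Y) [IsProbabilityMeasure μ] (hμ : MeasurePreserving f μ μ)
    (F : Finset (Y →ᵇ ℝ)) (ε : ℝ) (hε : 0 < ε) :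
    ∃ ν : ProbabilityMeasure Y, Ergodic f (ν : Measure Y) ∧ ∀ φ ∈ F,
      |∫ y, φ y ∂(ν : Measure Y) - ∫ y, φ y ∂μ| ≤ ε := by
  obtain ⟨z, N, hN0, hz⟩ := exists_orbit_aux f hf happ μ hμ F ε hε
  let O : Set Y := range fun a : ℕ => f^[a] z
  let K : Set Y := closure O
  have hmaps : MapsTo f K K := by
    refine MapsTo.closure ?_ hf
    rintro _ ⟨a, rfl⟩
    exact ⟨a + 1, Function.iterate_succ_apply' f a z⟩
  have hKc : IsClosed K := isClosed_closure
  have : CompactSpace K := isCompact_iff_compactSpace.1 hKc.isCompact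
  have : Nonempty K := ⟨⟨z, subset_closure ⟨0, rfl⟩⟩⟩
  obtain ⟨ν, hν, herg⟩ := exists_ergodic_aux (hmaps.restrict f K K) (hf.restrict hmaps)
  have hsub : MeasurePreserving (Subtype.val : K → Y) ν (ν.map Subtype.val) :=
    ⟨measurable_subtype_coe, rfl⟩
  have herg' : Ergodic f (ν.map (Subtype.val : K → Y)) :=
    hsub.ergodic_of_ergodic_semiconj herg hf.measurable (fun _ => rfl)
  have hprob := Measure.isProbabilityMeasure_map (μ := ν)
    (measurable_subtype_coe (p := (· ∈ K))).aemeasurable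
  refine ⟨⟨_, hprob⟩, herg', fun φ hφ => ?_⟩
  change |∫ y, φ y ∂(ν.map (Subtype.val : K → Y)) - ∫ y, φ y ∂μ| ≤ ε
  have hNp : (0 : ℝ) < N := by exact_mod_cast hN0
  have hK : ∀ y ∈ K, |∑ i ∈ Finset.range N, (φ (f^[i] y) - ∫ y, φ y ∂μ)| ≤ ε * N := by
    intro y hy
    have hcl : IsClosed {y | |∑ i ∈ Finset.range N, (φ (f^[i] y) - ∫ y, φ y ∂μ)| ≤ ε * N} := by
      refine isClosed_le ?_ continuous_const
      refine (continuous_finsetSum _ fun i _ => ?_).abs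
      exact (φ.continuous.comp (hf.iterate i)).sub continuous_const
    refine closure_minimal ?_ hcl hy
    rintro _ ⟨a, rfl⟩
    exact hz φ hφ a
  set ν' := ν.map (Subtype.val : K → Y) with hν'
  have hae : ∀ᵐ y ∂ν', y ∈ K := by
    rw [hν']
    refine (ae_map_iff (p := fun y => y ∈ K) measurable_subtype_coe.aemeasurable
      hKc.measurableSet).2 ?_
    exact Eventually.of_forall fun y => y.2
  have hint : ∫ y, ∑ i ∈ Finset.range N, (φ (f^[i] y) - ∫ y, φ y ∂μ) ∂ν' =
      N * (∫ y, φ y ∂ν' - ∫ y, φ y ∂μ) := by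
    rw [integral_finsetSum]
    · have : ∀ i ∈ Finset.range N, ∫ y, (φ (f^[i] y) - ∫ y, φ y ∂μ) ∂ν' =
          ∫ y, φ y ∂ν' - ∫ y, φ y ∂μ := by
        intro i _
        have hi : Integrable (fun y => φ (f^[i] y)) ν' :=
          (φ.compContinuous ⟨f^[i], hf.iterate i⟩).integrable ν'
        rw [integral_sub hi
          (integrable_const _)]
        congr 1
        · conv_rhs => rw [← (herg'.toMeasurePreserving.iterate i).map_eq]
          rw [integral_map (hf.iterate i).measurable.aemeasurable
            φ.continuous.aestronglyMeasurable]
        · simp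
      rw [Finset.sum_congr rfl this]
      simp [mul_sub]
    · intro i _
      exact ((φ.compContinuous ⟨f^[i], hf.iterate i⟩).integrable ν').sub (integrable_const _)
  have hb : ‖∫ y, ∑ i ∈ Finset.range N, (φ (f^[i] y) - ∫ y, φ y ∂μ) ∂ν'‖ ≤ ε * N := by
    have := norm_integral_le_of_norm_le_const (μ := ν') (C := ε * N)
      (f := fun y => ∑ i ∈ Finset.range N, (φ (f^[i] y) - ∫ y, φ y ∂μ))
      (by filter_upwards [hae] with y hy using hK y hy)
    simpa using this
  rw [hint, Real.norm_eq_abs, abs_mul, abs_of_pos hNp, mul_comm] at hb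
  exact le_of_mul_le_mul_right hb hNp

/-- **Entropy denseness of ergodic measures (Pfister–Sullivan).** For a compact
system with the approximate product property, the ergodic `f`-invariant Borel
probability measures are dense, in the weak-* topology, in the set of all
`f`-invariant Borel probability measures. -/
theorem app_ergodic_measures_dense
    {X : Type*} [MetricSpace X] [CompactSpace X] [MeasurableSpace X] [BorelSpace X]
    (f : X → X) (hf : Continuous f) (happ : ApproxProduct f) :
    ∀ μ : ProbabilityMeasure X, Measure.map f (μ : Measure X) = μ →
      μ ∈ closure {ν : ProbabilityMeasure X | Ergodic f (ν : Measure X)} := by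
  intro μ hμ
  classical
  have hμ' : MeasurePreserving f (μ : Measure X) (μ : Measure X) := ⟨hf.measurable, hμ⟩
  have h := fun p : Finset (BoundedContinuousFunction X ℝ) × ℕ =>
    exists_close_ergodic_aux f hf happ μ hμ' p.1 (1 / ((p.2 : ℝ) + 1)) (by positivity)
  choose ν hν1 hν2 using h
  refine mem_closure_of_tendsto (f := ν) (b := atTop) ?_ (Eventually.of_forall hν1)
  rw [ProbabilityMeasure.tendsto_iff_forall_integral_tendsto]
  intro φ
  rw [tendsto_iff_dist_tendsto_zero]
  have h0 : Tendsto (fun p : Finset (BoundedContinuousFunction X ℝ) × ℕ => 1 / ((p.2 : ℝ) + 1))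
      atTop (nhds 0) := by
    rw [← prod_atTop_atTop_eq]
    exact tendsto_one_div_add_atTop_nhds_zero_nat.comp tendsto_snd
  refine squeeze_zero' (Eventually.of_forall fun _ => dist_nonneg) ?_ h0
  filter_upwards [eventually_ge_atTop (({φ}, 0) : Finset (BoundedContinuousFunction X ℝ) × ℕ)]
    with p hp
  exact hν2 p φ (hp.1 (Finset.mem_singleton_self φ))
end Defs
end
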